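/- arXiv:1604.08639 — 3 statements merged into one kernel-verified Lean document; each statement's English description precedes it below -/
import Mathlib

section
/- Let D be a finite set of positive integers with at least two elements, let e ∈ D with e ∈ {3, 4, 6}, and set η_e = ∏_{d ∈ D \ {e}} Φ_d(ζ_e) ∈ ℤ[ζ_e]. If the principal ideal η_e ℤ[ζ_e] equals (1 − ζ_e)^k ℤ[ζ_e] for some k ∈ {1, 2}, and O(D \ {e}) is a GE_2-ring, then O(D) is a GE_2-ring. -/
/-!
Write `R = O(D)`, `S = ℤ[ζ_e]` and `S' = O(D \ {e})`. The projections `f : R → S` and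
`f' : R → S'` are surjective and their kernels meet in `0`. The ring `S` is quadratic over `ℤ`
and norm-Euclidean for `e ∈ {3, 4, 6}`, so it is a `GE_2`-ring (`isGE_quadratic`), and `S'` is
one by hypothesis.

Let `A ∈ SL_2(R)`. As `f` and `f'` are surjective, the images of `A` in `SL_2(S)` and
`SL_2(S')` lift to elements `k` and `k'` of `E_2(R)`. The element `k'⁻¹ k` of `E_2(R)` is trivial
modulo `K = ker f + ker f'`. If every such element can be written `q' q` with `q, q' ∈ E_2(R)`
trivial modulo `ker f` and `ker f'` respectively, then `q k⁻¹ A` is trivial modulo both kernels,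
hence equal to `1`, and `A ∈ E_2(R)`.

That factorization is a statement about the relations between elementary matrices over `R ⧸ K`
(`isGE_patch`). It holds because `R ⧸ K` is local (or zero) and all its units lift to units
of `R`: modulo the elements `q' q`, every element of `E_2(R)` can be brought to a Bruhat-like normal
form, and a normal form which is trivial modulo `K` is itself of the shape `q' q`.

The hypothesis on `η_e` gives `(1 - X)² ∈ K` (`exists_rep`), and also `Φ_e(X) ∈ K`. Together these
make `R ⧸ K` a small local ring whose units are all of the form `±Xⁱ` (`quadratic_local`), and
`X` is a unit of `R`, being a root of unity there (`isUnit_mk_X`).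
-/

/-- The set of `n × n` elementary matrices over `R`: matrices differing from the
identity by a single off-diagonal entry. -/
def ElemMatrices (n : ℕ) (R : Type*) [CommRing R] : Set (Matrix (Fin n) (Fin n) R) :=
  {M | ∃ (i j : Fin n) (c : R), i ≠ j ∧ M = Matrix.transvection i j c}

/-- `R` is a `GE_n`-ring: every matrix of determinant one is a product of
elementary matrices, i.e. `SL_n(R) = E_n(R)`. -/
def IsGE (R : Type*) [CommRing R] (n : ℕ) : Prop :=
  ∀ A : Matrix (Fin n) (Fin n) R, A.det = 1 → A ∈ Submonoid.closure (ElemMatrices n R)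

/-- `R` is a generalized Euclidean ring: a `GE_n`-ring for every `n ≥ 2`. -/
def IsGERing (R : Type*) [CommRing R] : Prop := ∀ n, 2 ≤ n → IsGE R n

/-- The primitive `e`-th root of unity `ζ_e = e^{2πi/e}`. -/
noncomputable def zeta (e : ℕ) : ℂ := Complex.exp (2 * Real.pi * Complex.I / e)

/-- The subring `ℤ[ζ_e]` of `ℂ`. -/
noncomputable def Zzeta (e : ℕ) : Subalgebra ℤ ℂ := Algebra.adjoin ℤ {zeta e}

/-- `ζ_e` as an element of `ℤ[ζ_e]`. -/
noncomputable def zetaEl (e : ℕ) : Zzeta e :=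
  ⟨zeta e, Algebra.self_mem_adjoin_singleton ℤ _⟩

/-- `η_e = ∏_{d ∈ D \ {e}} Φ_d(ζ_e)` as an element of `ℤ[ζ_e]`. -/
noncomputable def eta (D : Finset ℕ) (e : ℕ) : Zzeta e :=
  ∏ d ∈ D.erase e, Polynomial.aeval (zetaEl e) (Polynomial.cyclotomic d ℤ)

namespace GE2Patching

open Matrix

local notation "SL2" => Matrix.SpecialLinearGroup (Fin 2)

/-! ### Elementary matrices in `SL₂` -/

section Elementary

variable {R : Type*} [CommRing R]

/-- The upper elementary matrix with entry `x`. -/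
def e12 (x : R) : SL2 R := ⟨!![1, x; 0, 1], by simp⟩

/-- The lower elementary matrix with entry `x`. -/
def e21 (x : R) : SL2 R := ⟨!![1, 0; x, 1], by simp⟩

/-- The diagonal matrix `diag(u, u⁻¹)`. -/
def hh (u : Rˣ) : SL2 R := ⟨!![(u : R), 0; 0, ((u⁻¹ : Rˣ) : R)], by simp⟩

variable (R) in
/-- The group `E₂(R)`, as a subgroup of `SL₂(R)`. -/
def E2 : Subgroup (SL2 R) := Subgroup.closure (Set.range e12 ∪ Set.range e21)

lemma coe_e12 (x : R) : (e12 x : Matrix (Fin 2) (Fin 2) R) = !![1, x; 0, 1] := rfl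

lemma coe_e21 (x : R) : (e21 x : Matrix (Fin 2) (Fin 2) R) = !![1, 0; x, 1] := rfl

lemma coe_hh (u : Rˣ) :
    (hh u : Matrix (Fin 2) (Fin 2) R) = !![(u : R), 0; 0, ((u⁻¹ : Rˣ) : R)] := rfl

lemma e12_mem (x : R) : e12 x ∈ E2 R := Subgroup.subset_closure (Or.inl ⟨x, rfl⟩)

lemma e21_mem (x : R) : e21 x ∈ E2 R := Subgroup.subset_closure (Or.inr ⟨x, rfl⟩)

lemma e12_add (x y : R) : e12 (x + y) = e12 x * e12 y := by
  ext i j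
  fin_cases i <;> fin_cases j <;> simp [coe_e12, Matrix.mul_apply, Fin.sum_univ_two, add_comm]

lemma e21_add (x y : R) : e21 (x + y) = e21 x * e21 y := by
  ext i j
  fin_cases i <;> fin_cases j <;> simp [coe_e21, Matrix.mul_apply, Fin.sum_univ_two]

lemma e12_zero : e12 (0 : R) = 1 := by
  ext i j
  fin_cases i <;> fin_cases j <;> simp [coe_e12]

lemma e21_zero : e21 (0 : R) = 1 := by
  ext i j
  fin_cases i <;> fin_cases j <;> simp [coe_e21]

lemma e12_inv (x : R) : (e12 x)⁻¹ = e12 (-x) := by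
  rw [inv_eq_iff_mul_eq_one, ← e12_add, add_neg_cancel, e12_zero]

lemma e21_inv (x : R) : (e21 x)⁻¹ = e21 (-x) := by
  rw [inv_eq_iff_mul_eq_one, ← e21_add, add_neg_cancel, e21_zero]

lemma hh_mul (u v : Rˣ) : hh (u * v) = hh u * hh v := by
  ext i j
  fin_cases i <;> fin_cases j <;> simp [coe_hh, Matrix.mul_apply, Fin.sum_univ_two, mul_comm]

lemma hh_e12 (u : Rˣ) (x : R) : hh u * e12 x = e12 (u * u * x) * hh u := by
  ext i j
  fin_cases i <;> fin_cases j <;> simp [coe_hh, coe_e12, Matrix.mul_apply, Fin.sum_univ_two]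
  linear_combination (- (u : R) * x) * u.mul_inv

lemma hh_e21 (u : Rˣ) (x : R) :
    hh u * e21 x = e21 (((u⁻¹ : Rˣ) : R) * ((u⁻¹ : Rˣ) : R) * x) * hh u := by
  ext i j
  fin_cases i <;> fin_cases j <;> simp [coe_hh, coe_e21, Matrix.mul_apply, Fin.sum_univ_two]
  linear_combination (- ((u⁻¹ : Rˣ) : R) * x) * u.mul_inv

/-- Interchange of an upper and a lower elementary matrix, when `1 + xy` is a unit. -/
lemma e12_mul_e21 (x y : R) (u : Rˣ) (h : 1 + x * y = u) :
    e12 x * e21 y = e21 (((u⁻¹ : Rˣ) : R) * y) * hh u * e12 (((u⁻¹ : Rˣ) : R) * x) := by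
  have hu := u.mul_inv
  ext i j
  fin_cases i <;> fin_cases j <;> simp [coe_hh, coe_e12, coe_e21, Matrix.mul_apply, Fin.sum_univ_two, h]
  · linear_combination (-y) * hu
  · linear_combination (-1) * hu - ((u⁻¹ : Rˣ) : R) * h + (-x * y * ((u⁻¹ : Rˣ) : R)) * hu

lemma braid (v : Rˣ) :
    e21 (-((v⁻¹ : Rˣ) : R)) * e12 (v : R) * e21 (-((v⁻¹ : Rˣ) : R)) =
      e12 (v : R) * e21 (-((v⁻¹ : Rˣ) : R)) * e12 (v : R) := by
  ext i j
  fin_cases i <;> fin_cases j <;> simp [coe_e12, coe_e21, Matrix.mul_apply, Fin.sum_univ_two]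

lemma hh_mem (u : Rˣ) : hh u ∈ E2 R := by
  have h := e12_mul_e21 ((u : R) - 1) 1 u (by ring)
  have h2 : hh u = (e21 (((u⁻¹ : Rˣ) : R) * 1))⁻¹ * (e12 ((u : R) - 1) * e21 1) *
      (e12 (((u⁻¹ : Rˣ) : R) * ((u : R) - 1)))⁻¹ := by
    rw [h]; group
  rw [h2]
  exact mul_mem (mul_mem (inv_mem (e21_mem _)) (mul_mem (e12_mem _) (e21_mem _)))
    (inv_mem (e12_mem _))

lemma transvection_mem (i j : Fin 2) (c : R) (hij : i ≠ j) :
    ∃ g ∈ E2 R, (g : Matrix (Fin 2) (Fin 2) R) = Matrix.transvection i j c ∧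
      ((g⁻¹ : SL2 R) : Matrix (Fin 2) (Fin 2) R) = Matrix.transvection i j (-c) := by
  fin_cases i <;> fin_cases j
  · exact absurd rfl hij
  · refine ⟨e12 c, e12_mem c, ?_, ?_⟩
    · ext i j
      fin_cases i <;> fin_cases j <;> simp [coe_e12, Matrix.transvection, Matrix.single]
    · rw [e12_inv]
      ext i j
      fin_cases i <;> fin_cases j <;> simp [coe_e12, Matrix.transvection, Matrix.single]
  · refine ⟨e21 c, e21_mem c, ?_, ?_⟩
    · ext i j
      fin_cases i <;> fin_cases j <;> simp [coe_e21, Matrix.transvection, Matrix.single]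
    · rw [e21_inv]
      ext i j
      fin_cases i <;> fin_cases j <;> simp [coe_e21, Matrix.transvection, Matrix.single]
  · exact absurd rfl hij

lemma coe_e12_mem (x : R) : (e12 x : Matrix (Fin 2) (Fin 2) R) ∈
    Submonoid.closure (ElemMatrices 2 R) := by
  refine Submonoid.subset_closure ⟨0, 1, x, by decide, ?_⟩
  ext i j
  fin_cases i <;> fin_cases j <;> simp [coe_e12, Matrix.transvection, Matrix.single]

lemma coe_e21_mem (x : R) : (e21 x : Matrix (Fin 2) (Fin 2) R) ∈
    Submonoid.closure (ElemMatrices 2 R) := by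
  refine Submonoid.subset_closure ⟨1, 0, x, by decide, ?_⟩
  ext i j
  fin_cases i <;> fin_cases j <;> simp [coe_e21, Matrix.transvection, Matrix.single]

/-- `IsGE R 2` says that `E₂(R)` is all of `SL₂(R)`. -/
lemma isGE_iff : IsGE R 2 ↔ ∀ g : SL2 R, g ∈ E2 R := by
  constructor
  · intro H g
    have key : ∀ A ∈ Submonoid.closure (ElemMatrices 2 R), ∃ g ∈ E2 R,
        (g : Matrix (Fin 2) (Fin 2) R) = A := by
      intro A hA
      induction hA using Submonoid.closure_induction with
      | mem A hA =>
        obtain ⟨i, j, c, hij, rfl⟩ := hA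
        obtain ⟨g, hg, h, -⟩ := transvection_mem i j c hij
        exact ⟨g, hg, h⟩
      | one => exact ⟨1, one_mem _, by simp⟩
      | mul A B _ _ hA hB =>
        obtain ⟨g, hg, rfl⟩ := hA
        obtain ⟨k, hk, rfl⟩ := hB
        exact ⟨g * k, mul_mem hg hk, by simp⟩
    obtain ⟨k, hk, h⟩ := key g.1 (H g.1 g.2)
    have : k = g := Subtype.ext h
    exact this ▸ hk
  · intro H A hA
    have key : ∀ g ∈ E2 R, (g : Matrix (Fin 2) (Fin 2) R) ∈ Submonoid.closure (ElemMatrices 2 R) ∧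
        ((g⁻¹ : SL2 R) : Matrix (Fin 2) (Fin 2) R) ∈ Submonoid.closure (ElemMatrices 2 R) := by
      intro g hg
      induction hg using Subgroup.closure_induction with
      | mem g hg =>
        rcases hg with ⟨x, rfl⟩ | ⟨x, rfl⟩
        · rw [e12_inv]
          exact ⟨coe_e12_mem _, coe_e12_mem _⟩
        · rw [e21_inv]
          exact ⟨coe_e21_mem _, coe_e21_mem _⟩
      | one =>
        rw [inv_one, Matrix.SpecialLinearGroup.coe_one]
        exact ⟨one_mem _, one_mem _⟩
      | mul g k _ _ hg hk =>
        rw [_root_.mul_inv_rev, Matrix.SpecialLinearGroup.coe_mul, Matrix.SpecialLinearGroup.coe_mul]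
        exact ⟨mul_mem hg.1 hk.1, mul_mem hk.2 hg.2⟩
      | inv g _ hg =>
        rw [inv_inv]
        exact ⟨hg.2, hg.1⟩
    exact (key ⟨A, hA⟩ (H ⟨A, hA⟩)).1

/-- A ring with a division algorithm is a `GE₂`-ring: the Euclidean algorithm on the first column
of a matrix is carried out by elementary row operations. -/
lemma isGE_of_euclidean (N : R → ℕ) (hN : ∀ a c : R, c ≠ 0 → ∃ q, N (a + q * c) < N c) :
    IsGE R 2 := by
  rw [isGE_iff]
  have key : ∀ n : ℕ, ∀ g : SL2 R, N (g 1 0) = n → g ∈ E2 R := by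
    intro n
    induction n using Nat.strong_induction_on with
    | _ n ih =>
      intro g hg
      by_cases hc : g 1 0 = 0
      · have hdet : g 0 0 * g 1 1 = 1 := by
          have := g.det_coe
          rw [Matrix.det_fin_two, hc] at this
          simpa using this
        let u : Rˣ := ⟨g 0 0, g 1 1, hdet, by rw [mul_comm]; exact hdet⟩
        have : g = hh u * e12 (g 1 1 * g 0 1) := by
          ext i j
          fin_cases i <;> fin_cases j <;>
            simp [coe_hh, coe_e12, Matrix.mul_apply, Fin.sum_univ_two, u, hc]
          linear_combination (- g 0 1) * hdet
        rw [this]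
        exact mul_mem (hh_mem _) (e12_mem _)
      · obtain ⟨q, hq⟩ := hN (g 0 0) (g 1 0) hc
        have hw : e21 (1 : R) * e12 (-1) * e21 1 * e12 q ∈ E2 R :=
          mul_mem (mul_mem (mul_mem (e21_mem _) (e12_mem _)) (e21_mem _)) (e12_mem _)
        refine (Subgroup.mul_mem_cancel_left _ hw).1 (ih _ (hg ▸ hq) _ ?_)
        congr 1
        simp [coe_e21, coe_e12, Matrix.mul_apply, Fin.sum_univ_two]
  exact fun g => key _ g rfl

end Elementary

/-! ### Bruhat form over a local ring with liftable units -/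

section Bruhat

variable {R Q : Type*} [CommRing R] [Group Q]

/-- `s` is congruent modulo `K` to a unit of `R`. -/
def UMod (K : Ideal R) (s : R) : Prop := ∃ u : Rˣ, s - u ∈ K

/-- Every element of `R` is a lifted unit modulo `K`, or is square-zero modulo `K` and becomes a
lifted unit after adding `1`. So `R ⧸ K` is zero or local, with all its units lifting to `R`. -/
def LocalMod (K : Ideal R) : Prop := ∀ s : R, UMod K s ∨ (s * s ∈ K ∧ UMod K (1 + s))

lemma UMod.congr {K : Ideal R} {s t : R} (hs : UMod K s) (h : t - s ∈ K) : UMod K t := by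
  obtain ⟨u, hu⟩ := hs
  exact ⟨u, by simpa using K.add_mem h hu⟩

lemma UMod.neg {K : Ideal R} {s : R} (hs : UMod K s) : UMod K (-s) := by
  obtain ⟨u, hu⟩ := hs
  exact ⟨-u, by simpa [sub_eq_add_neg, add_comm] using K.neg_mem hu⟩

lemma LocalMod.one_add {K : Ideal R} (hK : LocalMod K) {s : R} (hs : ¬ UMod K s) :
    UMod K (1 + s) := ((hK s).resolve_left hs).2

lemma LocalMod.left {K : Ideal R} (hK : LocalMod K) {s t : R} (hs : UMod K (s * t)) :
    UMod K s := by
  rcases hK s with h | ⟨h, -⟩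
  · exact h
  · obtain ⟨u, hu⟩ := hs
    have h1 : (1 : R) ∈ K := by
      have h2 : (u : R) * u ∈ K := by
        have h3 := K.sub_mem (K.mul_mem_left (t * t) h) (K.mul_mem_left (s * t + u) hu)
        convert h3 using 1
        ring
      have h3 := K.mul_mem_left (((u⁻¹ : Rˣ) : R) * ((u⁻¹ : Rˣ) : R)) h2
      convert h3 using 1
      linear_combination (-1 - (u : R) * ((u⁻¹ : Rˣ) : R)) * u.mul_inv
    exact ⟨1, by simpa using K.mul_mem_left (s - 1) h1⟩

/-- A group `Q` with elements `a x`, `b y`, `h u` that satisfy the standard relations between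
`E₁₂(x)`, `E₂₁(y)` and `diag(u, u⁻¹)`, and whose `a x`, `b x` are trivial for `x ∈ K`. -/
structure Rels (K : Ideal R) (a b : R → Q) (h : Rˣ → Q) : Prop where
  a_add : ∀ x y, a (x + y) = a x * a y
  b_add : ∀ x y, b (x + y) = b x * b y
  a_K : ∀ x ∈ K, a x = 1
  b_K : ∀ x ∈ K, b x = 1
  h_mul : ∀ u v, h (u * v) = h u * h v
  h_a : ∀ (u : Rˣ) x, h u * a x = a ((u : R) * u * x) * h u
  h_b : ∀ (u : Rˣ) x, h u * b x = b (((u⁻¹ : Rˣ) : R) * ((u⁻¹ : Rˣ) : R) * x) * h u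
  a_b : ∀ (x y : R) (u : Rˣ), 1 + x * y = (u : R) →
    a x * b y = b (((u⁻¹ : Rˣ) : R) * y) * h u * a (((u⁻¹ : Rˣ) : R) * x)
  braid : ∀ v : Rˣ, b (-((v⁻¹ : Rˣ) : R)) * a (v : R) * b (-((v⁻¹ : Rˣ) : R)) =
      a (v : R) * b (-((v⁻¹ : Rˣ) : R)) * a (v : R)

namespace Rels

variable {K : Ideal R} {a b : R → Q} {h : Rˣ → Q}

lemma a_congr (H : Rels K a b h) {x y : R} (hxy : x - y ∈ K) : a x = a y := by
  have := H.a_add (x - y) y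
  rwa [sub_add_cancel, H.a_K _ hxy, one_mul] at this

lemma b_congr (H : Rels K a b h) {x y : R} (hxy : x - y ∈ K) : b x = b y := by
  have := H.b_add (x - y) y
  rwa [sub_add_cancel, H.b_K _ hxy, one_mul] at this

lemma a_inv (H : Rels K a b h) (x : R) : (a x)⁻¹ = a (-x) := by
  rw [inv_eq_iff_mul_eq_one, ← H.a_add, add_neg_cancel, H.a_K _ K.zero_mem]

lemma b_inv (H : Rels K a b h) (x : R) : (b x)⁻¹ = b (-x) := by
  rw [inv_eq_iff_mul_eq_one, ← H.b_add, add_neg_cancel, H.b_K _ K.zero_mem]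

lemma h_one (H : Rels K a b h) : h 1 = 1 := by
  have := H.h_mul 1 1
  rw [mul_one] at this
  exact left_eq_mul.1 this

lemma h_inv (H : Rels K a b h) (u : Rˣ) : (h u)⁻¹ = h u⁻¹ := by
  rw [inv_eq_iff_mul_eq_one, ← H.h_mul, mul_inv_cancel, H.h_one]

/-- `a x * h u` with the diagonal moved to the left. -/
lemma a_h (H : Rels K a b h) (u : Rˣ) (x : R) :
    a x * h u = h u * a (((u⁻¹ : Rˣ) : R) * ((u⁻¹ : Rˣ) : R) * x) := by
  rw [H.h_a]
  congr 2
  linear_combination (-x - x * (u : R) * ((u⁻¹ : Rˣ) : R)) * u.mul_inv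

lemma b_h (H : Rels K a b h) (u : Rˣ) (x : R) :
    b x * h u = h u * b ((u : R) * u * x) := by
  rw [H.h_b]
  congr 2
  linear_combination (-x - x * (u : R) * ((u⁻¹ : Rˣ) : R)) * u.mul_inv

/-- Units congruent to `1` have trivial diagonal matrices. -/
lemma h_K (H : Rels K a b h) (u : Rˣ) (hu : (u : R) - 1 ∈ K) : h u = 1 := by
  have h1 := H.a_b ((u : R) - 1) 1 u (by ring)
  have h2 : b (((u⁻¹ : Rˣ) : R) * 1) = b 1 := by
    apply H.b_congr
    have := K.mul_mem_left (-((u⁻¹ : Rˣ) : R)) hu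
    convert this using 1
    linear_combination u.mul_inv
  rw [H.a_K _ hu, H.a_K _ (K.mul_mem_left _ hu), h2, one_mul, mul_one] at h1
  exact left_eq_mul.1 h1

/-- Interchange when `1 + xy` is a unit modulo `K` and one of `x`, `y` is too: then `x` and `y` can
be changed modulo `K` so that `1 + xy` is a unit of `R`. -/
lemma swap_unit (H : Rels K a b h) {x y : R} (hxy : UMod K (1 + x * y))
    (hu : UMod K x ∨ UMod K y) :
    ∃ u u' : Rˣ, a x * b y = b ((u' : R) * y) * h u * a ((u' : R) * x) := by
  obtain ⟨w, hw⟩ := hxy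
  rcases hu with ⟨v, hv⟩ | ⟨v, hv⟩
  · have hy : y - ((v⁻¹ : Rˣ) : R) * (w - 1) ∈ K := by
      have := K.mul_mem_left ((v⁻¹ : Rˣ) : R) (K.sub_mem hw (K.mul_mem_left y hv))
      convert this using 1
      linear_combination (-y) * v.mul_inv
    have h1 := H.a_b (v : R) (((v⁻¹ : Rˣ) : R) * (w - 1)) w
      (by linear_combination ((w : R) - 1) * v.mul_inv)
    refine ⟨w, w⁻¹, ?_⟩
    rw [H.a_congr hv, H.b_congr hy, h1]
    refine congrArg₂ _ (congrArg (· * h w) ?_) ?_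
    · apply H.b_congr
      rw [← mul_sub, ← neg_sub]
      exact K.mul_mem_left _ (K.neg_mem hy)
    · apply H.a_congr
      rw [← mul_sub, ← neg_sub]
      exact K.mul_mem_left _ (K.neg_mem hv)
  · have hx : x - ((v⁻¹ : Rˣ) : R) * (w - 1) ∈ K := by
      have := K.mul_mem_left ((v⁻¹ : Rˣ) : R) (K.sub_mem hw (K.mul_mem_left x hv))
      convert this using 1
      linear_combination (-x) * v.mul_inv
    have h1 := H.a_b (((v⁻¹ : Rˣ) : R) * (w - 1)) (v : R) w
      (by linear_combination ((w : R) - 1) * v.mul_inv)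
    refine ⟨w, w⁻¹, ?_⟩
    rw [H.b_congr hv, H.a_congr hx, h1]
    refine congrArg₂ _ (congrArg (· * h w) ?_) ?_
    · apply H.b_congr
      rw [← mul_sub, ← neg_sub]
      exact K.mul_mem_left _ (K.neg_mem hv)
    · apply H.a_congr
      rw [← mul_sub, ← neg_sub]
      exact K.mul_mem_left _ (K.neg_mem hx)

/-- Interchange whenever `1 + xy` is a unit modulo `K`. If neither `x` nor `y` is a unit modulo `K`,
then `x = 1 + (x - 1)` is a sum of two units, past which `b y` is moved one at a time. -/
lemma swap (H : Rels K a b h) (hK : LocalMod K) {x y : R} (hxy : UMod K (1 + x * y)) :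
    ∃ (y' : R) (u : Rˣ) (x' : R), a x * b y = b y' * h u * a x' := by
  by_cases hu : UMod K x ∨ UMod K y
  · obtain ⟨u, u', e⟩ := H.swap_unit hxy hu
    exact ⟨_, _, _, e⟩
  · push Not at hu
    obtain ⟨hx, hy⟩ := hu
    have hmul : ∀ r, ¬ UMod K (r * y) := fun r hr => hy (hK.left (t := r) (by rwa [mul_comm]))
    have hx1 : UMod K (x - 1) := by
      have h1 : UMod K (1 + -x) := hK.one_add fun h => hx (by simpa using h.neg)
      have := h1.neg
      convert this using 1
      ring
    obtain ⟨u₁, u₁', e₁⟩ := H.swap_unit (hK.one_add (hmul (x - 1))) (Or.inl hx1)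
    obtain ⟨u₂, u₂', e₂⟩ := H.swap_unit (x := 1) (y := (u₁' : R) * y)
      (by rw [one_mul]; exact hK.one_add (hmul _)) (Or.inl ⟨1, by simp⟩)
    refine ⟨u₂' * (u₁' * y), u₂ * u₁,
      ((u₁⁻¹ : Rˣ) : R) * ((u₁⁻¹ : Rˣ) : R) * ((u₂' : R) * 1) + u₁' * (x - 1), ?_⟩
    calc a x * b y = a 1 * (a (x - 1) * b y) := by rw [← mul_assoc, ← H.a_add]; congr 2; ring
      _ = (a 1 * b (u₁' * y)) * h u₁ * a (u₁' * (x - 1)) := by rw [e₁]; simp only [mul_assoc]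
      _ = b (u₂' * (u₁' * y)) * h u₂ * (a (u₂' * 1) * h u₁) * a (u₁' * (x - 1)) := by
        rw [e₂]; simp only [mul_assoc]
      _ = _ := by rw [H.a_h, H.h_mul, H.a_add]; simp only [mul_assoc]

lemma swap' (H : Rels K a b h) (hK : LocalMod K) {x y : R} (hxy : UMod K (1 + y * x)) :
    ∃ (x' : R) (u : Rˣ) (y' : R), b y * a x = a x' * h u * b y' := by
  obtain ⟨y', u, x', e⟩ := H.swap hK (x := -x) (y := -y) (by
    have e : 1 + -x * -y = 1 + y * x := by ring
    rwa [e])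
  refine ⟨-x', u⁻¹, -y', ?_⟩
  have := congrArg (·⁻¹) e
  simpa [_root_.mul_inv_rev, H.a_inv, H.b_inv, H.h_inv, mul_assoc] using this

/-- The elements of the form `a * b * h * a`. -/
def T (a b : R → Q) (h : Rˣ → Q) : Set Q :=
  {g | ∃ (x y : R) (u : Rˣ) (z : R), g = a x * b y * h u * a z}

lemma T_a (H : Rels K a b h) (t : R) {g : Q} (hg : g ∈ T a b h) : a t * g ∈ T a b h := by
  obtain ⟨x, y, u, z, rfl⟩ := hg
  exact ⟨t + x, y, u, z, by rw [H.a_add]; simp only [mul_assoc]⟩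

lemma T_aux (H : Rels K a b h) (x y : R) (u v : Rˣ) (z w : R) :
    a x * h u * b y * h v * a z * a w ∈ T a b h := by
  refine ⟨x, ((u⁻¹ : Rˣ) : R) * ((u⁻¹ : Rˣ) : R) * y, u * v, z + w, ?_⟩
  rw [mul_assoc (a x), H.h_b, H.h_mul, H.a_add]
  simp only [mul_assoc]

/-- `T` is stable under left multiplication by lower elementary elements. If neither `1 + tx` nor
`1 + xy` is a unit modulo `K`, then `t` and `y` are `-x⁻¹` up to non-units, and the braid relation
applies. -/
lemma T_b (H : Rels K a b h) (hK : LocalMod K) (t : R) {g : Q} (hg : g ∈ T a b h) :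
    b t * g ∈ T a b h := by
  obtain ⟨x, y, u, z, rfl⟩ := hg
  by_cases h1 : UMod K (1 + t * x)
  · obtain ⟨x', v, t', e⟩ := H.swap' hK h1
    have : b t * (a x * b y * h u * a z) = a x' * h v * b (t' + y) * h u * a z * a 0 := by
      rw [H.b_add, H.a_K 0 K.zero_mem, mul_one]
      calc _ = (b t * a x) * (b y * h u * a z) := by simp only [mul_assoc]
        _ = _ := by rw [e]; simp only [mul_assoc]
    rw [this]
    exact H.T_aux _ _ _ _ _ _
  by_cases h2 : UMod K (1 + x * y)
  · obtain ⟨y', v, x', e⟩ := H.swap hK h2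
    have : b t * (a x * b y * h u * a z) = a 0 * h 1 * b (t + y') * h (v * u) *
        a (((u⁻¹ : Rˣ) : R) * ((u⁻¹ : Rˣ) : R) * x') * a z := by
      rw [H.b_add, H.a_K 0 K.zero_mem, H.h_one, H.h_mul]
      calc _ = b t * (a x * b y) * (h u * a z) := by simp only [mul_assoc]
        _ = b t * b y' * h v * (a x' * h u) * a z := by rw [e]; simp only [mul_assoc]
        _ = _ := by rw [H.a_h]; simp only [mul_assoc, one_mul]
    rw [this]
    exact H.T_aux _ _ _ _ _ _
  · have hx : UMod K x := by
      have h3 : UMod K (1 + -(1 + t * x)) := hK.one_add fun h => h1 (by simpa using h.neg)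
      refine hK.left (t := t) (h3.neg.congr ?_)
      have e : x * t - -(1 + -(1 + t * x)) = 0 := by ring
      rw [e]
      exact K.zero_mem
    obtain ⟨v, hv⟩ := hx
    have h3 : UMod K (1 + (t + ((v⁻¹ : Rˣ) : R)) * v) := by
      refine (hK.one_add h1).congr ?_
      convert K.mul_mem_left (-t) hv using 1
      linear_combination v.mul_inv
    have h4 : UMod K (1 + v * (y + ((v⁻¹ : Rˣ) : R))) := by
      refine (hK.one_add h2).congr ?_
      convert K.mul_mem_left (-y) hv using 1
      linear_combination v.mul_inv
    obtain ⟨x₁, v₁, t₁, e₁⟩ := H.swap' hK h3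
    obtain ⟨y₂, v₂, x₂, e₂⟩ := H.swap hK h4
    have : b t * (a x * b y * h u * a z) =
        a x₁ * h v₁ * b (t₁ + -((v⁻¹ : Rˣ) : R) + y₂) * h (v₂ * u) *
          a (((u⁻¹ : Rˣ) : R) * ((u⁻¹ : Rˣ) : R) * x₂) * a z := by
      have et : b t = b (t + ((v⁻¹ : Rˣ) : R)) * b (-((v⁻¹ : Rˣ) : R)) := by
        rw [← H.b_add]; congr 1; ring
      have ey : b y = b (-((v⁻¹ : Rˣ) : R)) * b (y + ((v⁻¹ : Rˣ) : R)) := by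
        rw [← H.b_add]; congr 1; ring
      rw [et, ey, H.a_congr hv, H.b_add (t₁ + _), H.b_add t₁, H.h_mul]
      calc _ = b (t + ((v⁻¹ : Rˣ) : R)) *
              (b (-((v⁻¹ : Rˣ) : R)) * a (v : R) * b (-((v⁻¹ : Rˣ) : R))) *
              b (y + ((v⁻¹ : Rˣ) : R)) * (h u * a z) := by simp only [mul_assoc]
        _ = (b (t + ((v⁻¹ : Rˣ) : R)) * a (v : R)) * b (-((v⁻¹ : Rˣ) : R)) *
              (a (v : R) * b (y + ((v⁻¹ : Rˣ) : R))) * (h u * a z) := by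
            rw [H.braid]; simp only [mul_assoc]
        _ = a x₁ * h v₁ * b t₁ * b (-((v⁻¹ : Rˣ) : R)) * b y₂ * h v₂ * (a x₂ * h u) * a z := by
            rw [e₁, e₂]; simp only [mul_assoc]
        _ = _ := by rw [H.a_h u x₂]; simp only [mul_assoc]
    rw [this]
    exact H.T_aux _ _ _ _ _ _

end Rels

end Bruhat

/-! ### Patching along two ideals -/

section Patching

variable {R S S' : Type*} [CommRing R] [CommRing S] [CommRing S']

lemma map_e12 (f : R →+* S) (x : R) : SpecialLinearGroup.map f (e12 x) = e12 (f x) := by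
  ext i j
  fin_cases i <;> fin_cases j <;> simp [coe_e12]

lemma map_e21 (f : R →+* S) (x : R) : SpecialLinearGroup.map f (e21 x) = e21 (f x) := by
  ext i j
  fin_cases i <;> fin_cases j <;> simp [coe_e21]

lemma exists_lift (f : R →+* S) (hf : Function.Surjective f) (g : SL2 S) (hg : g ∈ E2 S) :
    ∃ k ∈ E2 R, SpecialLinearGroup.map f k = g := by
  have : E2 S ≤ (E2 R).map (SpecialLinearGroup.map f) := by
    refine (Subgroup.closure_le _).2 ?_
    rintro _ (⟨x, rfl⟩ | ⟨x, rfl⟩)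
    · obtain ⟨x, rfl⟩ := hf x
      exact ⟨e12 x, e12_mem x, map_e12 f x⟩
    · obtain ⟨x, rfl⟩ := hf x
      exact ⟨e21 x, e21_mem x, map_e21 f x⟩
  exact this hg

/-- The elements of `E₂(R)` that become trivial in `SL₂(S)`. -/
def kerE (f : R →+* S) : Subgroup (E2 R) :=
  ((SpecialLinearGroup.map (n := Fin 2) f).comp (E2 R).subtype).ker

instance (f : R →+* S) : (kerE f).Normal := MonoidHom.normal_ker _

lemma mem_kerE {f : R →+* S} {g : E2 R} : g ∈ kerE f ↔ SpecialLinearGroup.map f g.1 = 1 :=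
  Iff.rfl

lemma kerE_mono {f : R →+* S} {f' : R →+* S'} (h : RingHom.ker f ≤ RingHom.ker f') :
    kerE f ≤ kerE f' := by
  intro g hg
  rw [mem_kerE] at hg ⊢
  ext i j
  have h1 := congrArg (fun k : SL2 S => k i j) hg
  have h2 : g.1 i j - (1 : SL2 R) i j ∈ RingHom.ker f := by
    rw [RingHom.mem_ker, map_sub, sub_eq_zero]
    refine (by simpa using h1 : f (g.1 i j) = (1 : Matrix (Fin 2) (Fin 2) S) i j).trans ?_
    by_cases hij : i = j <;> simp [hij, Matrix.one_apply]
  have h3 := h h2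
  rw [RingHom.mem_ker, map_sub, sub_eq_zero] at h3
  refine (by simpa using h3 :
    f' (g.1 i j) = f' ((1 : Matrix (Fin 2) (Fin 2) R) i j)).trans ?_
  by_cases hij : i = j <;> simp [hij, Matrix.one_apply]

/-- If `R ⧸ (ker f ⊔ ker f')` is local with liftable units, then an element of `E₂(R)` that is trivial
modulo `ker f ⊔ ker f'` is a product of elements of `E₂(R)` trivial modulo `ker f` and `ker f'`. -/
lemma mem_sup_of_congr (f : R →+* S) (f' : R →+* S')
    (hK : LocalMod (RingHom.ker f ⊔ RingHom.ker f')) (g : E2 R)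
    (hg : g ∈ kerE (Ideal.Quotient.mk (RingHom.ker f ⊔ RingHom.ker f'))) :
    g ∈ kerE f ⊔ kerE f' := by
  set K := RingHom.ker f ⊔ RingHom.ker f' with hKdef
  let π : E2 R →* E2 R ⧸ (kerE f ⊔ kerE f') := QuotientGroup.mk' _
  let A : R → E2 R := fun x => ⟨e12 x, e12_mem x⟩
  let B : R → E2 R := fun x => ⟨e21 x, e21_mem x⟩
  let C : Rˣ → E2 R := fun u => ⟨hh u, hh_mem u⟩
  have hA : ∀ x ∈ K, π (A x) = 1 := by
    intro x hx
    obtain ⟨y, hy, z, hz, rfl⟩ := Submodule.mem_sup.1 hx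
    refine (QuotientGroup.eq_one_iff _).2 ?_
    have e : A (y + z) = A y * A z := Subtype.ext (e12_add y z)
    rw [e]
    refine Subgroup.mul_mem_sup ?_ ?_
    · rw [mem_kerE, map_e12, RingHom.mem_ker.1 hy, e12_zero]
    · rw [mem_kerE, map_e12, RingHom.mem_ker.1 hz, e12_zero]
  have hB : ∀ x ∈ K, π (B x) = 1 := by
    intro x hx
    obtain ⟨y, hy, z, hz, rfl⟩ := Submodule.mem_sup.1 hx
    refine (QuotientGroup.eq_one_iff _).2 ?_
    have e : B (y + z) = B y * B z := Subtype.ext (e21_add y z)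
    rw [e]
    refine Subgroup.mul_mem_sup ?_ ?_
    · rw [mem_kerE, map_e21, RingHom.mem_ker.1 hy, e21_zero]
    · rw [mem_kerE, map_e21, RingHom.mem_ker.1 hz, e21_zero]
  have H : Rels K (fun x => π (A x)) (fun x => π (B x)) (fun u => π (C u)) :=
    { a_add := fun x y => by rw [← map_mul]; exact congrArg π (Subtype.ext (e12_add x y))
      b_add := fun x y => by rw [← map_mul]; exact congrArg π (Subtype.ext (e21_add x y))
      a_K := hA
      b_K := hB
      h_mul := fun u v => by rw [← map_mul]; exact congrArg π (Subtype.ext (hh_mul u v))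
      h_a := fun u x => by
        rw [← map_mul, ← map_mul]; exact congrArg π (Subtype.ext (hh_e12 u x))
      h_b := fun u x => by
        rw [← map_mul, ← map_mul]; exact congrArg π (Subtype.ext (hh_e21 u x))
      a_b := fun x y u h => by
        rw [← map_mul, ← map_mul, ← map_mul]
        exact congrArg π (Subtype.ext (e12_mul_e21 x y u h))
      braid := fun v => by
        rw [← map_mul, ← map_mul, ← map_mul, ← map_mul]
        exact congrArg π (Subtype.ext (braid v)) }
  -- Every element of the quotient has the form `a * b * h * a`.
  have hT : ∀ k : E2 R, π k ∈ Rels.T (fun x => π (A x)) (fun x => π (B x)) (fun u => π (C u)) := by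
    rintro ⟨k, hk⟩
    induction hk using Subgroup.closure_induction_left with
    | one =>
      refine ⟨0, 0, 1, 0, ?_⟩
      have h1 : π (C 1) = 1 := H.h_one
      change π 1 = π (A 0) * π (B 0) * π (C 1) * π (A 0)
      rw [hA 0 K.zero_mem, hB 0 K.zero_mem, h1, map_one]
      simp only [mul_one]
    | mul_left x hx y hy ih =>
      have hy' : y ∈ E2 R := hy
      rcases hx with ⟨x, rfl⟩ | ⟨x, rfl⟩
      · have e : π ⟨e12 x * y, mul_mem (e12_mem x) hy'⟩ = π (A x) * π ⟨y, hy'⟩ := by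
          rw [← map_mul]; rfl
        exact e ▸ H.T_a x ih
      · have e : π ⟨e21 x * y, mul_mem (e21_mem x) hy'⟩ = π (B x) * π ⟨y, hy'⟩ := by
          rw [← map_mul]; rfl
        exact e ▸ H.T_b hK x ih
    | inv_mul_cancel x hx y hy ih =>
      have hy' : y ∈ E2 R := hy
      rcases hx with ⟨x, rfl⟩ | ⟨x, rfl⟩
      · have e : π ⟨(e12 x)⁻¹ * y, mul_mem (inv_mem (e12_mem x)) hy'⟩ =
            π (A (-x)) * π ⟨y, hy'⟩ := by
          rw [← map_mul]
          exact congrArg π (Subtype.ext (by simp only [e12_inv]; rfl))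
        exact e ▸ H.T_a (-x) ih
      · have e : π ⟨(e21 x)⁻¹ * y, mul_mem (inv_mem (e21_mem x)) hy'⟩ =
            π (B (-x)) * π ⟨y, hy'⟩ := by
          rw [← map_mul]
          exact congrArg π (Subtype.ext (by simp only [e21_inv]; rfl))
        exact e ▸ H.T_b hK (-x) ih
  obtain ⟨x, y, u, z, e⟩ := hT g
  -- The representative `w` of `g` is itself trivial modulo `K`.
  let w : E2 R := A x * B y * C u * A z
  have hπ : π g = π w := by rw [e]; simp only [w, map_mul]
  have hle : kerE f ⊔ kerE f' ≤ kerE (Ideal.Quotient.mk K) :=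
    sup_le (kerE_mono (by rw [Ideal.mk_ker]; exact le_sup_left))
      (kerE_mono (by rw [Ideal.mk_ker]; exact le_sup_right))
  have hw : w ∈ kerE (Ideal.Quotient.mk K) := by
    have h1 := hle (QuotientGroup.eq.1 hπ)
    simpa using mul_mem hg h1
  have hent : ∀ i j, Ideal.Quotient.mk K (w.1 i j) = (1 : Matrix (Fin 2) (Fin 2) (R ⧸ K)) i j := by
    intro i j
    have := congrArg (fun k : SL2 (R ⧸ K) => k i j) (mem_kerE.1 hw)
    simpa using this
  have hw' : w.1 = e12 x * e21 y * hh u * e12 z := rfl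
  have h10 := hent 1 0
  have h00 := hent 0 0
  have h01 := hent 0 1
  rw [hw'] at h10 h00 h01
  simp [coe_e12, coe_e21, coe_hh, Matrix.mul_apply, Fin.sum_univ_two] at h10 h00 h01
  have huu : Ideal.Quotient.mk K (u : R) * Ideal.Quotient.mk K ((u⁻¹ : Rˣ) : R) = 1 := by
    rw [← map_mul, u.mul_inv, map_one]
  have hy : Ideal.Quotient.mk K y = 0 := by
    linear_combination Ideal.Quotient.mk K ((u⁻¹ : Rˣ) : R) * h10 - Ideal.Quotient.mk K y * huu
  have hu : Ideal.Quotient.mk K (u : R) = 1 := by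
    linear_combination h00 - Ideal.Quotient.mk K x * Ideal.Quotient.mk K u * hy
  have hxz : Ideal.Quotient.mk K (x + z) = 0 := by
    rw [hy, hu] at h01
    rw [hu] at huu
    rw [map_add]
    linear_combination h01 - Ideal.Quotient.mk K x * huu
  have hC : π (C u) = 1 := H.h_K u (by
    rw [← Ideal.Quotient.eq_zero_iff_mem, map_sub, hu, map_one, sub_self])
  have hfin : π g = 1 := by
    have e1 : π (A (x + z)) = π (A x) * π (A z) := H.a_add x z
    rw [e]
    change π (A x) * π (B y) * π (C u) * π (A z) = 1
    rw [hB y (Ideal.Quotient.eq_zero_iff_mem.1 hy), hC, mul_one, mul_one, ← e1]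
    exact hA _ (Ideal.Quotient.eq_zero_iff_mem.1 hxz)
  exact (QuotientGroup.eq_one_iff g).1 hfin

lemma map_mk_eq {K : Ideal R} (f : R →+* S) (x y : SL2 R) (hf : RingHom.ker f ≤ K)
    (hxy : SpecialLinearGroup.map f x = SpecialLinearGroup.map f y) :
    SpecialLinearGroup.map (Ideal.Quotient.mk K) x =
      SpecialLinearGroup.map (Ideal.Quotient.mk K) y := by
  ext i j
  have h2 : f (x i j) = f (y i j) := congrArg (fun m : SL2 S => m i j) hxy
  have h3 : x i j - y i j ∈ K := hf (by rw [RingHom.mem_ker, map_sub, h2, sub_self])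
  exact Ideal.Quotient.eq.2 h3

/-- Patching: if `R` embeds in `S × S'`, both projections are onto `GE₂`-rings, and
`R ⧸ (ker f ⊔ ker f')` is local with units that lift to `R`, then `R` is a `GE₂`-ring. -/
theorem isGE_patch (f : R →+* S) (f' : R →+* S') (hf : Function.Surjective f)
    (hf' : Function.Surjective f') (hinf : RingHom.ker f ⊓ RingHom.ker f' = ⊥)
    (hK : LocalMod (RingHom.ker f ⊔ RingHom.ker f')) (hS : IsGE S 2) (hS' : IsGE S' 2) :
    IsGE R 2 := by
  rw [isGE_iff] at hS hS' ⊢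
  intro g
  obtain ⟨k, hk, ek⟩ := exists_lift f hf _ (hS (SpecialLinearGroup.map f g))
  obtain ⟨k', hk', ek'⟩ := exists_lift f' hf' _ (hS' (SpecialLinearGroup.map f' g))
  set K := RingHom.ker f ⊔ RingHom.ker f' with hKdef
  -- `p` is trivial modulo `K`, as `k` and `k'` both agree with `g` there.
  let p : E2 R := ⟨k'⁻¹ * k, mul_mem (inv_mem hk') hk⟩
  have hp : p ∈ kerE (Ideal.Quotient.mk K) := by
    rw [mem_kerE]
    change SpecialLinearGroup.map (Ideal.Quotient.mk K) (k'⁻¹ * k) = 1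
    rw [map_mul, map_inv, map_mk_eq f k g le_sup_left ek, map_mk_eq f' k' g le_sup_right ek',
      inv_mul_cancel]
  have hp2 : p ∈ kerE f' ⊔ kerE f := by
    rw [sup_comm]
    exact mem_sup_of_congr f f' hK p hp
  obtain ⟨q', hq', q, hq, hqq⟩ := Subgroup.mem_sup_of_normal_left.1 hp2
  have hqq' : (q' : SL2 R) * q = k'⁻¹ * k := congrArg Subtype.val hqq
  rw [mem_kerE] at hq'
  rw [mem_kerE] at hq
  -- The element `q * k⁻¹ * g` is trivial modulo `ker f` and modulo `ker f'`.
  have h1 : SpecialLinearGroup.map f ((q : SL2 R) * k⁻¹ * g) = 1 := by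
    rw [map_mul, map_mul, hq, map_inv, ek, one_mul, inv_mul_cancel]
  have h2 : SpecialLinearGroup.map f' ((q : SL2 R) * k⁻¹ * g) = 1 := by
    have e : (q : SL2 R) * k⁻¹ * g = (q' : SL2 R)⁻¹ * k'⁻¹ * g := by
      have : (q : SL2 R) = (q' : SL2 R)⁻¹ * (k'⁻¹ * k) := by rw [← hqq']; group
      rw [this]; group
    rw [e, map_mul, map_mul, map_inv, hq', map_inv, ek', inv_one, one_mul, inv_mul_cancel]
  have h3 : (q : SL2 R) * k⁻¹ * g = 1 := by
    ext i j
    have h4 : ((q : SL2 R) * k⁻¹ * g) i j - (1 : SL2 R) i j ∈ RingHom.ker f ⊓ RingHom.ker f' := by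
      refine ⟨?_, ?_⟩
      · have := congrArg (fun m : SL2 S => m i j) (h1.trans (map_one (SpecialLinearGroup.map f)).symm)
        rw [SetLike.mem_coe, RingHom.mem_ker, map_sub, sub_eq_zero]
        exact this
      · have := congrArg (fun m : SL2 S' => m i j)
          (h2.trans (map_one (SpecialLinearGroup.map f')).symm)
        rw [SetLike.mem_coe, RingHom.mem_ker, map_sub, sub_eq_zero]
        exact this
    rw [hinf, Ideal.mem_bot, sub_eq_zero] at h4
    exact h4
  exact (Subgroup.mul_mem_cancel_left _ (mul_mem q.2 (inv_mem hk))).1 (h3 ▸ one_mem _)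

end Patching

/-! ### The quadratic rings `ℤ[ω]` with `ω² = bω - 1` -/

section Quadratic

open Polynomial

/-- The ring `ℤ[ω]`, `ω² = bω - 1`, with `|b| ≤ 1`, is norm-Euclidean. -/
lemma isGE_quadratic (b : ℤ) (hb : b = 0 ∨ b = 1 ∨ b = -1) :
    IsGE (QuadraticAlgebra ℤ (-1) b) 2 := by
  refine isGE_of_euclidean (fun z => z.norm.toNat) fun α β hβ => ?_
  have hnorm : ∀ z : QuadraticAlgebra ℤ (-1) b,
      z.norm = z.re * z.re + b * z.re * z.im + z.im * z.im := by
    intro z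
    rw [QuadraticAlgebra.norm_def]
    ring
  have hb1 : 0 ≤ b + 1 ∧ 0 ≤ 1 - b := by omega
  have hpos : 0 < β.norm := by
    rw [hnorm]
    by_contra hcon
    apply hβ
    have h1 : β.im * β.im = 0 ∧ β.re * β.re = 0 := by
      rcases hb with rfl | rfl | rfl <;> constructor <;>
        nlinarith [sq_nonneg (β.re + β.im), sq_nonneg (β.re - β.im), sq_nonneg β.re,
          sq_nonneg β.im]
    ext
    · simpa using h1.2
    · simpa using h1.1
  set n := β.norm with hn
  -- The coordinates of `γ / n = α / β` are rounded to nearest integers.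
  set γ := α * star β with hγ
  have hround : ∀ p : ℤ, ∃ x r : ℤ, p = n * x + r ∧ 2 * r ≤ n ∧ -n ≤ 2 * r := by
    intro p
    refine ⟨(2 * p + n) / (2 * n), p - n * ((2 * p + n) / (2 * n)), by ring, ?_, ?_⟩
    · have := Int.lt_ediv_add_one_mul_self (2 * p + n) (by omega : 0 < 2 * n)
      nlinarith
    · have := Int.ediv_mul_le (2 * p + n) (by omega : 2 * n ≠ 0)
      nlinarith
  obtain ⟨x, r, hr, hr1, hr2⟩ := hround γ.re
  obtain ⟨y, s, hs, hs1, hs2⟩ := hround γ.im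
  refine ⟨-⟨x, y⟩, ?_⟩
  have key : (α + -⟨x, y⟩ * β) * star β = ⟨r, s⟩ := by
    have h1 : β * star β = (n : QuadraticAlgebra ℤ (-1) b) := by
      rw [← QuadraticAlgebra.algebraMap_norm_eq_mul_star]
      rfl
    have h2 : (α + -⟨x, y⟩ * β) * star β = γ - n * ⟨x, y⟩ := by
      rw [hγ, ← h1]; ring
    rw [h2]
    ext
    · simp; linarith
    · simp; linarith
  have hmul : (α + -⟨x, y⟩ * β).norm * n = r * r + b * r * s + s * s := by
    rw [hn, ← QuadraticAlgebra.norm_star β, ← map_mul, key, hnorm]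
  have hlt : r * r + b * r * s + s * s < n * n := by
    have hr3 : 4 * (r * r) ≤ n * n := by nlinarith
    have hs3 : 4 * (s * s) ≤ n * n := by nlinarith
    rcases hb with rfl | rfl | rfl <;> nlinarith [sq_nonneg (r - s), sq_nonneg (r + s)]
  have hfin : (α + -⟨x, y⟩ * β).norm < n := by
    rw [← hmul] at hlt
    exact lt_of_mul_lt_mul_right hlt hpos.le
  exact (Int.toNat_lt_toNat hpos).2 hfin

/-- Modulo `ω² = bω - 1` and `(1 - ω)² = 0`, every element of `ℤ[ω]` is one of `±1, ±ω, ±ω²`, or is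
square-zero and becomes one of these after adding `1`. -/
lemma quadratic_local {A : Type*} [CommRing A] (b : ℤ) (hb : b = 0 ∨ b = 1 ∨ b = -1) (x : A)
    (h1 : x * x = b * x - 1) (h2 : (1 - x) * (1 - x) = 0) (m n : ℤ) :
    (∃ i : ℕ, (m + n * x : A) = x ^ i ∨ (m + n * x : A) = -x ^ i) ∨
      ((m + n * x : A) * (m + n * x) = 0 ∧
        ∃ i : ℕ, (1 + (m + n * x) : A) = x ^ i ∨ (1 + (m + n * x) : A) = -x ^ i) := by
  rcases hb with rfl | rfl | rfl
  · have h3 : (2 : A) = 0 := by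
      push_cast at h1
      linear_combination x * h2 + (2 - x) * h1
    obtain ⟨m', hm⟩ : ∃ m', m = 2 * m' ∨ m = 2 * m' + 1 := ⟨m / 2, by omega⟩
    obtain ⟨n', hn⟩ : ∃ n', n = 2 * n' ∨ n = 2 * n' + 1 := ⟨n / 2, by omega⟩
    push_cast at h1
    rcases hm with rfl | rfl <;> rcases hn with rfl | rfl <;> push_cast
    · refine Or.inr ⟨?_, 0, Or.inl ?_⟩
      · linear_combination (2 * (m' + n' * x) * (m' + n' * x)) * h3
      · linear_combination (m' + n' * x) * h3
    · exact Or.inl ⟨1, Or.inl (by linear_combination (m' + n' * x) * h3)⟩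
    · exact Or.inl ⟨0, Or.inl (by linear_combination (m' + n' * x) * h3)⟩
    · refine Or.inr ⟨?_, 1, Or.inl ?_⟩
      · linear_combination (2 * (m' + n' * x) * (m' + n' * x) + 2 * (m' + n' * x) * (1 + x)
          + x) * h3 + h1
      · linear_combination (m' + n' * x + 1) * h3
  · have h3 : (1 : A) = 0 := by
      push_cast at h1
      linear_combination (1 - x) * h1 + x * h2 + h1 - h2
    exact Or.inl ⟨0, Or.inl (by linear_combination (m + n * x - x ^ 0) * h3)⟩
  · have h3 : (3 : A) = 0 := by
      push_cast at h1
      linear_combination (x + 1) * (h2 - h1) + 3 * h1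
    obtain ⟨m', hm⟩ : ∃ m', m = 3 * m' ∨ m = 3 * m' + 1 ∨ m = 3 * m' - 1 := ⟨(m + 1) / 3, by omega⟩
    obtain ⟨n', hn⟩ : ∃ n', n = 3 * n' ∨ n = 3 * n' + 1 ∨ n = 3 * n' - 1 := ⟨(n + 1) / 3, by omega⟩
    push_cast at h1
    rcases hm with rfl | rfl | rfl <;> rcases hn with rfl | rfl | rfl <;> push_cast
    · refine Or.inr ⟨?_, 0, Or.inl ?_⟩
      · linear_combination (3 * (m' + n' * x) * (m' + n' * x)) * h3
      · linear_combination (m' + n' * x) * h3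
    · exact Or.inl ⟨1, Or.inl (by linear_combination (m' + n' * x) * h3)⟩
    · exact Or.inl ⟨1, Or.inr (by linear_combination (m' + n' * x) * h3)⟩
    · exact Or.inl ⟨0, Or.inl (by linear_combination (m' + n' * x) * h3)⟩
    · exact Or.inl ⟨2, Or.inr (by linear_combination (m' + n' * x) * h3 + h1)⟩
    · refine Or.inr ⟨?_, 2, Or.inl ?_⟩
      · linear_combination (3 * (m' + n' * x) * (m' + n' * x) + 2 * (m' + n' * x) * (1 - x)) * h3
          + h2
      · linear_combination (m' + n' * x + 1) * h3 - h1
    · exact Or.inl ⟨0, Or.inr (by linear_combination (m' + n' * x) * h3)⟩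
    · refine Or.inr ⟨?_, 1, Or.inl ?_⟩
      · linear_combination (3 * (m' + n' * x) * (m' + n' * x) - 2 * (m' + n' * x) * (1 - x)) * h3
          + h2
      · linear_combination (m' + n' * x) * h3
    · exact Or.inl ⟨2, Or.inl (by linear_combination (m' + n' * x) * h3 - h1)⟩

end Quadratic

/-! ### Cyclotomic rings -/

section Cyclotomic

open Polynomial

lemma cyclotomic_quadratic (e : ℕ) (he : e ∈ ({3, 4, 6} : Finset ℕ)) :
    ∃ b : ℤ, (b = 0 ∨ b = 1 ∨ b = -1) ∧ cyclotomic e ℤ = X ^ 2 - C b * X + 1 := by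
  simp only [Finset.mem_insert, Finset.mem_singleton] at he
  rcases he with rfl | rfl | rfl
  · exact ⟨-1, by simp, by rw [cyclotomic_three]; simp⟩
  · refine ⟨0, by simp, ?_⟩
    have h := cyclotomic_prime_pow_eq_geom_sum (R := ℤ) (n := 1) Nat.prime_two
    norm_num [Finset.sum_range_succ] at h
    rw [h]; simp; ring
  · exact ⟨1, by simp, by rw [cyclotomic_six]; simp⟩

/-- The kernel of `ℤ[X] → ℤ[ω]` is generated by the quadratic polynomial of `ω`. -/
lemma ker_aeval_omega (b : ℤ) (p : ℤ[X]) :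
    aeval (QuadraticAlgebra.omega : QuadraticAlgebra ℤ (-1) b) p = 0 ↔
      X ^ 2 - C b * X + 1 ∣ p := by
  set ω : QuadraticAlgebra ℤ (-1) b := QuadraticAlgebra.omega with hω
  set P : ℤ[X] := X ^ 2 - C b * X + 1 with hP
  have hPω : aeval ω P = 0 := by
    simp only [hP, map_add, map_sub, map_mul, map_pow, aeval_X, aeval_C, map_one]
    ext <;> simp [hω, pow_two, QuadraticAlgebra.re_one, QuadraticAlgebra.im_one]
  constructor
  · intro h
    have hdeg : P.natDegree = 2 := by rw [hP]; compute_degree!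
    have hmonic : P.Monic := by rw [hP]; monicity!
    rw [← modByMonic_eq_zero_iff_dvd hmonic]
    have hr : aeval ω (p %ₘ P) = 0 := by
      have h1 := modByMonic_add_div p P
      rw [← h1] at h
      simpa [hPω] using h
    have hlt : (p %ₘ P).natDegree < 2 := by
      rw [← hdeg]
      exact natDegree_modByMonic_lt p hmonic (by intro h1; simp [h1] at hdeg)
    have hlin := eq_X_add_C_of_natDegree_le_one (Nat.lt_succ_iff.1 hlt)
    rw [hlin] at hr
    simp only [map_add, map_mul, aeval_X, aeval_C] at hr
    have h1 := congrArg QuadraticAlgebra.re hr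
    have h2 := congrArg QuadraticAlgebra.im hr
    simp [hω] at h1 h2
    rw [hlin, h1, h2]
    simp
  · rintro ⟨q, rfl⟩
    rw [map_mul, hPω, zero_mul]

/-- The hypothesis on `η_e` gives `(1 - X)² ∈ (Φ_e) + ⋂_{d ≠ e} (Φ_d)` in `ℤ[X]`. -/
lemma exists_rep (D : Finset ℕ) (e : ℕ) (he : 0 < e)
    (heta : ∃ k ∈ ({1, 2} : Finset ℕ),
      Ideal.span {eta D e} = Ideal.span {(1 - zetaEl e) ^ k}) :
    ∃ p q : ℤ[X], (1 - X) ^ 2 = p + q ∧ cyclotomic e ℤ ∣ p ∧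
      q ∈ (⨅ d ∈ D.erase e, Ideal.span {cyclotomic d ℤ} : Ideal ℤ[X]) := by
  obtain ⟨k, hk, h⟩ := heta
  have hk2 : k ≤ 2 := by
    simp only [Finset.mem_insert, Finset.mem_singleton] at hk
    omega
  have h1 : (1 - zetaEl e) ^ 2 ∈ Ideal.span {eta D e} := by
    rw [h, Ideal.mem_span_singleton]
    exact pow_dvd_pow _ hk2
  obtain ⟨g, hg⟩ := Ideal.mem_span_singleton.1 h1
  obtain ⟨G, hG⟩ : ∃ G : ℤ[X], aeval (zeta e) G = (g : ℂ) := by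
    have : (g : ℂ) ∈ Algebra.adjoin ℤ {zeta e} := g.2
    rw [Algebra.adjoin_singleton_eq_range_aeval] at this
    exact this
  set Ψ : ℤ[X] := ∏ d ∈ D.erase e, cyclotomic d ℤ with hΨ
  have hΨη : aeval (zeta e) Ψ = (eta D e : ℂ) := by
    have e1 : eta D e = aeval (zetaEl e) Ψ := by rw [hΨ, map_prod]; rfl
    rw [e1]
    exact aeval_algHom_apply (Zzeta e).val (zetaEl e) Ψ
  refine ⟨(1 - X) ^ 2 - Ψ * G, Ψ * G, by ring, ?_, ?_⟩
  · have hprim : IsPrimitiveRoot (zeta e) e := Complex.isPrimitiveRoot_exp e he.ne'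
    rw [cyclotomic_eq_minpoly hprim he]
    refine minpoly.isIntegrallyClosed_dvd (hprim.isIntegral he) ?_
    have hg' := congrArg (Subtype.val : Zzeta e → ℂ) hg
    have hg2 : (1 - zeta e) ^ 2 = (eta D e : ℂ) * (g : ℂ) := hg'
    simp only [map_sub, map_mul, map_pow, map_one, aeval_X, hG, hΨη]
    rw [hg2, sub_self]
  · simp only [Ideal.mem_iInf]
    intro d hd
    exact Ideal.mul_mem_right _ _ (Ideal.mem_span_singleton.2 (Finset.dvd_prod_of_mem _ hd))

lemma isUnit_mk_X (D : Finset ℕ) (hpos : ∀ d ∈ D, 0 < d) :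
    IsUnit (Ideal.Quotient.mk (⨅ d ∈ D, Ideal.span {cyclotomic d ℤ} : Ideal ℤ[X]) X) := by
  set n := ∏ d ∈ D, d with hn
  have hn0 : n ≠ 0 := Finset.prod_ne_zero_iff.2 fun d hd => (hpos d hd).ne'
  refine IsUnit.of_pow_eq_one (n := n) ?_ hn0
  rw [← map_pow, ← map_one (Ideal.Quotient.mk _), Ideal.Quotient.eq]
  simp only [Ideal.mem_iInf]
  intro d hd
  rw [Ideal.mem_span_singleton]
  obtain ⟨m, hm⟩ : d ∣ n := Finset.dvd_prod_of_mem _ hd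
  refine (cyclotomic.dvd_X_pow_sub_one d ℤ).trans ?_
  rw [hm, pow_mul]
  simpa using sub_dvd_pow_sub_pow (X ^ d : ℤ[X]) 1 m

end Cyclotomic

end GE2Patching

/-- If `e ∈ D ∩ {3,4,6}`, `η_e ℤ[ζ_e] = (1 - ζ_e)^k ℤ[ζ_e]` for some
`k ∈ {1,2}`, and `O(D \ {e})` is a `GE_2`-ring, then `O(D)` is a `GE_2`-ring. -/
theorem stmt_12 (D : Finset ℕ) (hpos : ∀ d ∈ D, 0 < d) (hcard : 2 ≤ D.card)
    (e : ℕ) (he : e ∈ D) (heS : e ∈ ({3, 4, 6} : Finset ℕ))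
    (heta : ∃ k ∈ ({1, 2} : Finset ℕ),
      Ideal.span {eta D e} = Ideal.span {(1 - zetaEl e) ^ k})
    (hGE : IsGE (Polynomial ℤ ⧸
      (⨅ d ∈ D.erase e, Ideal.span {Polynomial.cyclotomic d ℤ})) 2) :
    IsGE (Polynomial ℤ ⧸ (⨅ d ∈ D, Ideal.span {Polynomial.cyclotomic d ℤ})) 2 := by
  classical
  obtain ⟨b, hb, hcyc⟩ := GE2Patching.cyclotomic_quadratic e heS
  set I : Ideal (Polynomial ℤ) := ⨅ d ∈ D, Ideal.span {Polynomial.cyclotomic d ℤ} with hI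
  set I' : Ideal (Polynomial ℤ) := ⨅ d ∈ D.erase e, Ideal.span {Polynomial.cyclotomic d ℤ} with hI'
  have hII' : I ≤ I' := by
    intro p hp
    simp only [hI, hI', Ideal.mem_iInf] at hp ⊢
    exact fun d hd => hp d (Finset.mem_of_mem_erase hd)
  have hmem : ∀ p, p ∈ I ↔ Polynomial.cyclotomic e ℤ ∣ p ∧ p ∈ I' := by
    intro p
    simp only [hI, hI', Ideal.mem_iInf, Ideal.mem_span_singleton]
    constructor
    · exact fun h => ⟨h e he, fun d hd => h d (Finset.mem_of_mem_erase hd)⟩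
    · rintro ⟨h1, h2⟩ d hd
      by_cases hde : d = e
      · exact hde ▸ h1
      · exact h2 d (Finset.mem_erase.2 ⟨hde, hd⟩)
  let φ : Polynomial ℤ →+* QuadraticAlgebra ℤ (-1) b :=
    (Polynomial.aeval (QuadraticAlgebra.omega : QuadraticAlgebra ℤ (-1) b)).toRingHom
  have hφ : ∀ p, φ p = 0 ↔ Polynomial.cyclotomic e ℤ ∣ p := by
    intro p
    rw [hcyc]
    exact GE2Patching.ker_aeval_omega b p
  let f : Polynomial ℤ ⧸ I →+* QuadraticAlgebra ℤ (-1) b :=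
    Ideal.Quotient.lift I φ fun p hp => (hφ p).2 ((hmem p).1 hp).1
  let f' : Polynomial ℤ ⧸ I →+* Polynomial ℤ ⧸ I' := Ideal.Quotient.factor hII'
  have hfmk : ∀ p, f (Ideal.Quotient.mk I p) = φ p := fun p => rfl
  have hf'mk : ∀ p, f' (Ideal.Quotient.mk I p) = Ideal.Quotient.mk I' p := fun p => rfl
  let x : Polynomial ℤ ⧸ I := Ideal.Quotient.mk I Polynomial.X
  have hlin : ∀ z : QuadraticAlgebra ℤ (-1) b, f (z.re + z.im * x) = z := by
    intro z
    have h1 : f x = QuadraticAlgebra.omega := by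
      rw [hfmk]
      exact Polynomial.aeval_X _
    rw [map_add, map_mul, map_intCast, map_intCast, h1]
    ext <;> simp
  obtain ⟨p, q, hpq, hp, hq⟩ := GE2Patching.exists_rep D e (hpos e he) heta
  obtain ⟨u, hu⟩ := GE2Patching.isUnit_mk_X D hpos
  refine GE2Patching.isGE_patch f f' (fun z => ⟨_, hlin z⟩)
    (Ideal.Quotient.factor_surjective hII') ?_ ?_ (GE2Patching.isGE_quadratic b hb) hGE
  · rw [eq_bot_iff]
    intro y hy
    obtain ⟨r, rfl⟩ := Ideal.Quotient.mk_surjective y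
    obtain ⟨h1, h2⟩ := hy
    rw [SetLike.mem_coe, RingHom.mem_ker] at h1 h2
    rw [hfmk, hφ] at h1
    rw [hf'mk, Ideal.Quotient.eq_zero_iff_mem] at h2
    exact Ideal.Quotient.eq_zero_iff_mem.2 ((hmem r).2 ⟨h1, h2⟩)
  · set K := RingHom.ker f ⊔ RingHom.ker f' with hK
    let c := Ideal.Quotient.mk K
    have hc : ∀ y, y ∈ K ↔ c y = 0 := fun y => Ideal.Quotient.eq_zero_iff_mem.symm
    have hleft : ∀ r, Polynomial.cyclotomic e ℤ ∣ r → c (Ideal.Quotient.mk I r) = 0 := by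
      intro r hr
      exact (hc _).1 (Ideal.mem_sup_left (RingHom.mem_ker.2 (by rw [hfmk, hφ]; exact hr)))
    have hright : ∀ r, r ∈ I' → c (Ideal.Quotient.mk I r) = 0 := by
      intro r hr
      exact (hc _).1 (Ideal.mem_sup_right (RingHom.mem_ker.2
        (by rw [hf'mk, Ideal.Quotient.eq_zero_iff_mem]; exact hr)))
    have h1 : c x * c x = b * c x - 1 := by
      have hC : (Polynomial.C b : Polynomial ℤ) = ((b : ℤ) : Polynomial ℤ) := by simp
      have := hleft _ (dvd_of_eq hcyc)
      rw [hC] at this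
      simp only [map_add, map_sub, map_mul, map_pow, map_one, map_intCast] at this
      linear_combination this
    have h2 : (1 - c x) * (1 - c x) = 0 := by
      have h3 : c (Ideal.Quotient.mk I ((1 - Polynomial.X) ^ 2)) = 0 := by
        rw [hpq, map_add, map_add, hleft p hp, hright q hq, add_zero]
      simp only [map_sub, map_pow, map_one] at h3
      linear_combination h3
    -- The powers `±xⁱ` are units already in `ℤ[X] ⧸ I`.
    have hunit : ∀ y, (∃ i : ℕ, c y = c x ^ i ∨ c y = -c x ^ i) → GE2Patching.UMod K y := by
      rintro y ⟨i, h | h⟩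
      · refine ⟨u ^ i, (hc _).2 ?_⟩
        rw [map_sub, h, Units.val_pow_eq_pow_val, hu, map_pow, sub_self]
      · refine ⟨-u ^ i, (hc _).2 ?_⟩
        rw [map_sub, h, Units.val_neg, Units.val_pow_eq_pow_val, hu, map_neg, map_pow, sub_self]
    intro s
    have hs : c s = ((f s).re : _ ⧸ K) + ((f s).im : _ ⧸ K) * c x := by
      have h3 : s - ((f s).re + (f s).im * x) ∈ K :=
        Ideal.mem_sup_left (RingHom.mem_ker.2 (by rw [map_sub, hlin, sub_self]))
      have h4 := (hc _).1 h3
      rw [map_sub, sub_eq_zero] at h4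
      rw [h4, map_add, map_mul, map_intCast, map_intCast]
    have key := GE2Patching.quadratic_local b hb (c x) h1 h2 (f s).re (f s).im
    rw [← hs] at key
    rcases key with h | ⟨h, h'⟩
    · exact Or.inl (hunit s h)
    · refine Or.inr ⟨(hc _).2 (by rw [map_mul]; exact h), hunit _ ?_⟩
      rw [map_add, map_one]
      exact h'
end

section
/- Every finite commutative ring with identity is a generalized Euclidean ring: SL_n(R) = E_n(R) for all n ≥ 2. -/
open Matrix

namespace FiniteGE

/-- Stable rank one for a finite commutative ring. The unimodular pair is normalised so that `b`
absorbs its coefficient. -/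
lemma isUnit_add_of_finite {R : Type*} [CommRing R] [Finite R] {a b r : R}
    (h : r * a + b = 1) : ∃ t : R, IsUnit (a + t * b) := by
  obtain ⟨k, hk, he⟩ : ∃ k : ℕ, 0 < k ∧ IsIdempotentElem (a ^ k) := by
    obtain ⟨m, n, hmn, hpow⟩ := Finite.exists_ne_map_eq_of_infinite (fun n : ℕ => a ^ n)
    wlog hlt : m < n generalizing m n
    · exact this n m hmn.symm hpow.symm (by omega)
    obtain ⟨d, rfl⟩ := Nat.exists_eq_add_of_lt hlt
    -- The powers of `a` are periodic with period `d + 1` from exponent `m` on, so any positive multiple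
    -- of the period that is at least `m` is an exponent with idempotent power.
    have hper : ∀ q j : ℕ, a ^ (m + j + q * (d + 1)) = a ^ (m + j) := by
      intro q j
      induction q with
      | zero => simp
      | succ q ih =>
        calc a ^ (m + j + (q + 1) * (d + 1))
            = a ^ (m + d + 1) * a ^ (j + q * (d + 1)) := by rw [← pow_add]; congr 1; ring
          _ = a ^ m * a ^ (j + q * (d + 1)) := by rw [← show a ^ m = a ^ (m + d + 1) from hpow]
          _ = a ^ (m + j + q * (d + 1)) := by rw [← pow_add]; congr 1; ring
          _ = a ^ (m + j) := ih
    refine ⟨(m + 1) * (d + 1), by positivity, ?_⟩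
    have h1 := hper (m + 1) (m * d + d + 1)
    have h2 : m + (m * d + d + 1) = (m + 1) * (d + 1) := by ring
    rw [h2] at h1
    rw [IsIdempotentElem, ← pow_add, h1]
  refine ⟨1 - a ^ k, ?_⟩
  by_contra hu
  obtain ⟨M, hM, hmem⟩ := exists_max_ideal_of_mem_nonunits hu
  have hp := hM.isPrime
  by_cases ha : a ∈ M
  · have hak : a ^ k ∈ M := Ideal.pow_mem_of_mem M ha k hk
    apply hp.ne_top
    rw [Ideal.eq_top_iff_one]
    have : (1 : R) = (a + (1 - a ^ k) * b) + b * a ^ k + (r - 1) * a := by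
      linear_combination -h
    rw [this]
    exact M.add_mem (M.add_mem hmem (M.mul_mem_left _ hak)) (M.mul_mem_left _ ha)
  · have hak : a ^ k ∉ M := fun h' => ha (hp.mem_of_pow_mem _ h')
    have h0 : a ^ k * (1 - a ^ k) ∈ M := by
      have : a ^ k * (1 - a ^ k) = 0 := by rw [mul_sub, he.eq]; ring
      rw [this]; exact M.zero_mem
    have h1 : 1 - a ^ k ∈ M := (hp.mem_or_mem h0).resolve_left hak
    apply ha
    have : a = (a + (1 - a ^ k) * b) - b * (1 - a ^ k) := by ring
    rw [this]
    exact M.sub_mem hmem (M.mul_mem_left _ h1)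

section

variable {R : Type*} [CommRing R] {n : ℕ}

lemma transvection_mem {i j : Fin n} (h : i ≠ j) (c : R) :
    transvection i j c ∈ Submonoid.closure (ElemMatrices n R) :=
  Submonoid.subset_closure ⟨i, j, c, h, rfl⟩

/-- `E_n(R)` is closed under inverses, in the form of left cancellation. -/
lemma mem_of_mul_mem {T : Matrix (Fin n) (Fin n) R}
    (hT : T ∈ Submonoid.closure (ElemMatrices n R)) :
    ∀ A, T * A ∈ Submonoid.closure (ElemMatrices n R) →
      A ∈ Submonoid.closure (ElemMatrices n R) := by
  induction hT using Submonoid.closure_induction with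
  | mem x hx =>
    obtain ⟨i, j, c, hij, rfl⟩ := hx
    intro A hA
    have h := mul_mem (transvection_mem hij (-c)) hA
    rwa [← mul_assoc, transvection_mul_transvection_same _ _ hij, neg_add_cancel,
      transvection_zero, one_mul] at h
  | one => simp
  | mul x y _ _ hx hy =>
    intro A hA
    rw [mul_assoc] at hA
    exact hy _ (hx _ hA)

/-- The unipotent matrix with first row `(1, c)` and all other rows those of the identity. -/
def rowMat (c : Fin n → R) : Matrix (Fin (n + 1)) (Fin (n + 1)) R :=
  1 + ∑ i, single 0 i.succ (c i)

/-- The unipotent matrix with first column `(1, c)` and all other columns those of the identity. -/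
def colMat (c : Fin n → R) : Matrix (Fin (n + 1)) (Fin (n + 1)) R :=
  1 + ∑ i, single i.succ 0 (c i)

lemma rowMat_mem (c : Fin n → R) :
    rowMat c ∈ Submonoid.closure (ElemMatrices (n + 1) R) := by
  unfold rowMat
  induction (Finset.univ : Finset (Fin n)) using Finset.induction_on with
  | empty => simp
  | insert a s ha ih =>
    have h := mul_mem ih (transvection_mem (Fin.succ_ne_zero a).symm (c a))
    convert h using 1
    rw [Finset.sum_insert ha, transvection, add_mul, mul_add, mul_one, mul_add, mul_one, Finset.sum_mul,
      Finset.sum_eq_zero (f := fun i : Fin n => single 0 i.succ (c i) * single 0 a.succ (c a))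
      fun i _ => single_mul_single_of_ne _ _ _ _ (Fin.succ_ne_zero i) _]
    rw [one_mul]
    abel

lemma colMat_mem (c : Fin n → R) :
    colMat c ∈ Submonoid.closure (ElemMatrices (n + 1) R) := by
  unfold colMat
  induction (Finset.univ : Finset (Fin n)) using Finset.induction_on with
  | empty => simp
  | insert a s ha ih =>
    have h := mul_mem ih (transvection_mem (Fin.succ_ne_zero a) (c a))
    convert h using 1
    rw [Finset.sum_insert ha, transvection, add_mul, mul_add, mul_one, mul_add, mul_one, Finset.sum_mul,
      Finset.sum_eq_zero (f := fun i : Fin n => single i.succ 0 (c i) * single a.succ 0 (c a))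
      fun i _ => single_mul_single_of_ne _ _ _ _ (Fin.succ_ne_zero a).symm _]
    rw [one_mul]
    abel

lemma rowMat_mul_zero (c : Fin n → R) (A : Matrix (Fin (n + 1)) (Fin (n + 1)) R)
    (j : Fin (n + 1)) : (rowMat c * A) 0 j = A 0 j + ∑ i, c i * A i.succ j := by
  simp [rowMat, add_mul, Finset.sum_mul, Matrix.sum_apply]

lemma colMat_mul_zero (c : Fin n → R) (A : Matrix (Fin (n + 1)) (Fin (n + 1)) R)
    (j : Fin (n + 1)) : (colMat c * A) 0 j = A 0 j := by
  simp [colMat, add_mul, Finset.sum_mul, Matrix.sum_apply, single_mul_apply_of_ne,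
    (Fin.succ_ne_zero _).symm]

lemma colMat_mul_succ (c : Fin n → R) (A : Matrix (Fin (n + 1)) (Fin (n + 1)) R)
    (i : Fin n) (j : Fin (n + 1)) : (colMat c * A) i.succ j = A i.succ j + c i * A 0 j := by
  rw [colMat, add_mul, Finset.sum_mul, Matrix.add_apply, one_mul, Matrix.sum_apply,
    Finset.sum_eq_single i]
  · simp
  · intro k _ hk
    exact single_mul_apply_of_ne _ _ _ _ _ (by simpa using hk.symm) _
  · simp

/-- The block matrix `diag(1, B)`. -/
def blockOne (B : Matrix (Fin n) (Fin n) R) : Matrix (Fin (n + 1)) (Fin (n + 1)) R :=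
  Matrix.of (Fin.cons (Fin.cons 1 0) fun i => Fin.cons 0 (B i))

@[simp] lemma blockOne_zero_zero (B : Matrix (Fin n) (Fin n) R) : blockOne B 0 0 = 1 := rfl
@[simp] lemma blockOne_zero_succ (B : Matrix (Fin n) (Fin n) R) (j : Fin n) :
    blockOne B 0 j.succ = 0 := rfl
@[simp] lemma blockOne_succ_zero (B : Matrix (Fin n) (Fin n) R) (i : Fin n) :
    blockOne B i.succ 0 = 0 := rfl
@[simp] lemma blockOne_succ_succ (B : Matrix (Fin n) (Fin n) R) (i j : Fin n) :
    blockOne B i.succ j.succ = B i j := rfl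

lemma blockOne_mul (A B : Matrix (Fin n) (Fin n) R) :
    blockOne (A * B) = blockOne A * blockOne B := by
  ext i j
  refine Fin.cases ?_ (fun i => ?_) i <;> refine Fin.cases ?_ (fun j => ?_) j <;>
    simp [Matrix.mul_apply, Fin.sum_univ_succ]

lemma blockOne_one : blockOne (1 : Matrix (Fin n) (Fin n) R) = 1 := by
  ext i j
  refine Fin.cases ?_ (fun i => ?_) i <;> refine Fin.cases ?_ (fun j => ?_) j <;>
    simp [Matrix.one_apply, (Fin.succ_ne_zero _).symm]

lemma blockOne_mem {B : Matrix (Fin n) (Fin n) R}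
    (hB : B ∈ Submonoid.closure (ElemMatrices n R)) :
    blockOne B ∈ Submonoid.closure (ElemMatrices (n + 1) R) := by
  induction hB using Submonoid.closure_induction with
  | mem x hx =>
    obtain ⟨i, j, c, hij, rfl⟩ := hx
    convert transvection_mem (i := i.succ) (j := j.succ) (by simpa using hij) c using 1
    ext k l
    refine Fin.cases ?_ (fun k => ?_) k <;> refine Fin.cases ?_ (fun l => ?_) l <;>
      simp [transvection, Matrix.one_apply, Matrix.single_apply, (Fin.succ_ne_zero _).symm]
  | one => rw [blockOne_one]; exact one_mem _
  | mul x y _ _ hx hy => rw [blockOne_mul]; exact mul_mem hx hy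

/-- A matrix with first column `(1, 0, …, 0)` factors as `diag(1, B)` times a `rowMat`. -/
lemma eq_blockOne_mul_rowMat {A : Matrix (Fin (n + 1)) (Fin (n + 1)) R} (h0 : A 0 0 = 1)
    (hs : ∀ i : Fin n, A i.succ 0 = 0) :
    A = blockOne (A.submatrix Fin.succ Fin.succ) * rowMat (fun j => A 0 j.succ) := by
  ext i j
  rw [rowMat, mul_add, Finset.mul_sum, Matrix.add_apply, mul_one, Matrix.sum_apply]
  refine Fin.cases ?_ (fun i => ?_) i <;> refine Fin.cases ?_ (fun j => ?_) j <;>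
    simp [h0, hs, Matrix.mul_apply, Matrix.single_apply, Fin.sum_univ_succ,
      (Fin.succ_ne_zero _).symm]

lemma det_eq_one_of_mem {T : Matrix (Fin n) (Fin n) R}
    (hT : T ∈ Submonoid.closure (ElemMatrices n R)) : T.det = 1 := by
  induction hT using Submonoid.closure_induction with
  | mem x hx => obtain ⟨i, j, c, hij, rfl⟩ := hx; exact det_transvection_of_ne i j hij c
  | one => simp
  | mul x y _ _ hx hy => rw [det_mul, hx, hy, one_mul]

lemma det_mul_of_mem {T A : Matrix (Fin n) (Fin n) R}
    (hT : T ∈ Submonoid.closure (ElemMatrices n R)) (hA : A.det = 1) : (T * A).det = 1 := by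
  rw [det_mul, det_eq_one_of_mem hT, hA, one_mul]

/-- Induction step once the top left entry is `1`. -/
lemma mem_of_corner_one (ih : IsGE R n) {A : Matrix (Fin (n + 1)) (Fin (n + 1)) R}
    (hA : A.det = 1) (h0 : A 0 0 = 1) : A ∈ Submonoid.closure (ElemMatrices (n + 1) R) := by
  have hT := colMat_mem (R := R) fun i : Fin n => -A i.succ 0
  apply mem_of_mul_mem hT
  have hdet := det_mul_of_mem hT hA
  have h1 := colMat_mul_zero (fun i : Fin n => -A i.succ 0) A 0
  have h2 : ∀ i : Fin n, (colMat (fun i : Fin n => -A i.succ 0) * A) i.succ 0 = 0 := by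
    intro i; rw [colMat_mul_succ, h0]; ring
  generalize colMat (fun i : Fin n => -A i.succ 0) * A = C at *
  rw [h0] at h1
  rw [eq_blockOne_mul_rowMat h1 h2]
  refine mul_mem (blockOne_mem (ih _ ?_)) (rowMat_mem _)
  rw [det_succ_column_zero, Fin.sum_univ_succ] at hdet
  simpa [h1, h2, Fin.succAbove_zero] using hdet

/-- Induction step once the top left entry is a unit; there must be at least two rows. -/
lemma mem_of_corner_isUnit (ih : IsGE R (n + 1)) {A : Matrix (Fin (n + 2)) (Fin (n + 2)) R}
    (hA : A.det = 1) (h0 : IsUnit (A 0 0)) :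
    A ∈ Submonoid.closure (ElemMatrices (n + 2) R) := by
  obtain ⟨v, hv⟩ := h0.exists_left_inv
  have h10 : (1 : Fin (n + 2)) ≠ 0 := by simp
  have hT := transvection_mem (R := R) h10 ((1 - A 1 0) * v)
  have hT' := transvection_mem (R := R) h10.symm (1 - A 0 0)
  apply mem_of_mul_mem hT
  apply mem_of_mul_mem hT'
  apply mem_of_corner_one ih (det_mul_of_mem hT' (det_mul_of_mem hT hA))
  rw [transvection_mul_apply_same, transvection_mul_apply_same,
    transvection_mul_apply_of_ne _ _ _ _ h10.symm]
  linear_combination (1 - A 0 0) * (1 - A 1 0) * hv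

lemma isGE_of_finite [Finite R] : ∀ n, IsGE R (n + 1)
  | 0 => by
    intro A hA
    have : A = 1 := by
      ext i j
      have hi : i = 0 := by omega
      have hj : j = 0 := by omega
      subst hi hj
      simpa using hA
    rw [this]; exact one_mem _
  | n + 1 => by
    intro A hA
    -- Expansion of the determinant along the first column shows that it is unimodular.
    obtain ⟨w, hw⟩ : ∃ w : Fin (n + 2) → R, ∑ i, w i * A i 0 = 1 := by
      refine ⟨fun i => (-1) ^ (i : ℕ) * (A.submatrix i.succAbove Fin.succ).det, ?_⟩
      rw [det_succ_column_zero] at hA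
      exact (Finset.sum_congr rfl fun i _ => by ring).trans hA
    rw [Fin.sum_univ_succ] at hw
    obtain ⟨t, ht⟩ := isUnit_add_of_finite hw
    have hT := rowMat_mem (R := R) fun i : Fin (n + 1) => t * w i.succ
    apply mem_of_mul_mem hT
    apply mem_of_corner_isUnit (isGE_of_finite n) (det_mul_of_mem hT hA)
    rw [rowMat_mul_zero]
    simpa only [mul_assoc, ← Finset.mul_sum] using ht

end

end FiniteGE

/-- Every finite commutative ring is a generalized Euclidean ring. -/
theorem stmt_14 (R : Type*) [CommRing R] [Finite R] : IsGERing R := by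
  intro n hn
  obtain ⟨m, rfl⟩ := Nat.exists_eq_add_of_le' (Nat.one_le_of_lt hn)
  exact FiniteGE.isGE_of_finite m
end

section
/- Every commutative Artinian ring with identity is a generalized Euclidean ring: SL_n(R) = E_n(R) for all n ≥ 2. -/
open Matrix

namespace ArtinianGE

variable {R : Type*} [CommRing R]

/-- Stable rank one for Artinian rings. -/
lemma exists_isUnit_add_mul [IsArtinianRing R] (a b x : R) (h : x * a + b = 1) :
    ∃ t, IsUnit (a + t * b) := by
  classical
  obtain ⟨t, ht⟩ := Ideal.pi_mkQ_surjective (I := fun m : MaximalSpectrum R => m.asIdeal)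
    (fun m n hmn => by
      have := m.isMaximal
      have := n.isMaximal
      exact Ideal.isCoprime_of_isMaximal (fun h => hmn (MaximalSpectrum.ext h)))
    (fun m => if a ∈ m.asIdeal then 1 else 0)
  refine ⟨t, ?_⟩
  by_contra hu
  obtain ⟨m, hm, hmem⟩ := exists_max_ideal_of_mem_nonunits hu
  have h1 := congrFun ht ⟨m, hm⟩
  change Ideal.Quotient.mk m t = (if a ∈ m then 1 else 0) at h1
  have h2 := Ideal.Quotient.eq_zero_iff_mem.2 hmem
  have h3 := congrArg (Ideal.Quotient.mk m) h
  simp only [map_add, map_mul, map_one] at h2 h3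
  have hne : (1 : R ⧸ m) ≠ 0 := fun h =>
    hm.ne_top ((Ideal.eq_top_iff_one m).2 (Ideal.Quotient.eq_zero_iff_mem.1 h))
  split_ifs at h1 with ha
  · rw [← Ideal.Quotient.eq_zero_iff_mem] at ha
    rw [h1, ha] at h2
    rw [ha] at h3
    apply hne
    linear_combination h2 - h3
  · rw [h1] at h2
    exact ha (Ideal.Quotient.eq_zero_iff_mem.1 (by simpa using h2))

/-- The monoid generated by the elementary matrices, for an arbitrary finite index type. -/
def elem (ι R : Type*) [Fintype ι] [DecidableEq ι] [CommRing R] : Submonoid (Matrix ι ι R) :=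
  Submonoid.closure {M | ∃ (i j : ι) (c : R), i ≠ j ∧ M = transvection i j c}

variable {ι κ : Type*} [Fintype ι] [DecidableEq ι] [Fintype κ] [DecidableEq κ]

lemma transvection_mem {i j : ι} (h : i ≠ j) (c : R) : transvection i j c ∈ elem ι R :=
  Submonoid.subset_closure ⟨i, j, c, h, rfl⟩

lemma reindex_mem (e : ι ≃ κ) {A : Matrix ι ι R} (hA : A ∈ elem ι R) :
    reindexAlgEquiv R R e A ∈ elem κ R := by
  induction hA using Submonoid.closure_induction with
  | mem M hM =>
    obtain ⟨i, j, c, hij, rfl⟩ := hM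
    have := TransvectionStruct.toMatrix_reindexEquiv e ⟨i, j, hij, c⟩
    rw [TransvectionStruct.toMatrix_mk (i := i)] at this
    rw [← this]
    exact transvection_mem (fun h => hij (e.injective h)) c
  | one => rw [map_one]; exact one_mem _
  | mul x y _ _ hx hy => rw [map_mul]; exact mul_mem hx hy

lemma reindex_mem_iff (e : ι ≃ κ) {A : Matrix ι ι R} :
    reindexAlgEquiv R R e A ∈ elem κ R ↔ A ∈ elem ι R := by
  refine ⟨fun h => ?_, reindex_mem e⟩
  have := reindex_mem e.symm h
  convert this using 1
  ext i j
  simp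

lemma fromBlocks_one_mem {A : Matrix ι ι R} (hA : A ∈ elem ι R) :
    fromBlocks (1 : Matrix Unit Unit R) 0 0 A ∈ elem (Unit ⊕ ι) R := by
  induction hA using Submonoid.closure_induction with
  | mem M hM =>
    obtain ⟨i, j, c, hij, rfl⟩ := hM
    convert transvection_mem (R := R) (i := Sum.inr i) (j := Sum.inr j) (ι := Unit ⊕ ι)
      (by simpa using hij) c using 1
    ext (a | a) (b | b) <;> simp [transvection, Matrix.one_apply, single_apply]
  | one => rw [fromBlocks_one]; exact one_mem _
  | mul x y _ _ hx hy =>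
    convert mul_mem hx hy using 1
    simp [fromBlocks_multiply]

/-- The block matrix `[1 c; 0 1]` with a `1 × 1` upper left corner. -/
def upper (c : ι → R) : Matrix (Unit ⊕ ι) (Unit ⊕ ι) R :=
  fromBlocks 1 (replicateRow Unit c) 0 1

/-- The block matrix `[1 0; c 1]` with a `1 × 1` upper left corner. -/
def lower (c : ι → R) : Matrix (Unit ⊕ ι) (Unit ⊕ ι) R :=
  fromBlocks 1 0 (replicateCol Unit c) 1

lemma upper_add (c d : ι → R) : upper (c + d) = upper c * upper d := by
  simp [upper, fromBlocks_multiply, replicateRow_add, add_comm]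

lemma lower_add (c d : ι → R) : lower (c + d) = lower c * lower d := by
  simp [lower, fromBlocks_multiply, replicateCol_add]

lemma upper_zero : upper (0 : ι → R) = 1 := by
  simp [upper]

lemma lower_zero : lower (0 : ι → R) = 1 := by
  simp [lower]

lemma upper_mem (c : ι → R) : upper c ∈ elem (Unit ⊕ ι) R := by
  rw [← Finset.univ_sum_single c]
  refine Finset.sum_induction _ (fun d => upper d ∈ elem (Unit ⊕ ι) R)
    (fun a b ha hb => ?_) ?_ (fun i _ => ?_)
  · rw [upper_add]; exact mul_mem ha hb
  · rw [upper_zero]; exact one_mem _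
  · convert transvection_mem (R := R) (i := Sum.inl ()) (j := Sum.inr i) (ι := Unit ⊕ ι)
      (by simp) (c i) using 1
    ext (a | a) (b | b) <;>
      simp [upper, transvection, Matrix.one_apply, single_apply, Pi.single_apply, eq_comm]

lemma lower_mem (c : ι → R) : lower c ∈ elem (Unit ⊕ ι) R := by
  rw [← Finset.univ_sum_single c]
  refine Finset.sum_induction _ (fun d => lower d ∈ elem (Unit ⊕ ι) R)
    (fun a b ha hb => ?_) ?_ (fun i _ => ?_)
  · rw [lower_add]; exact mul_mem ha hb
  · rw [lower_zero]; exact one_mem _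
  · convert transvection_mem (R := R) (i := Sum.inr i) (j := Sum.inl ()) (ι := Unit ⊕ ι)
      (by simp) (c i) using 1
    ext (a | a) (b | b) <;>
      simp [lower, transvection, Matrix.one_apply, single_apply, Pi.single_apply, eq_comm]

lemma mem_of_upper_mul_mem (c : ι → R) {A : Matrix (Unit ⊕ ι) (Unit ⊕ ι) R}
    (h : upper c * A ∈ elem (Unit ⊕ ι) R) : A ∈ elem (Unit ⊕ ι) R := by
  have := mul_mem (upper_mem (-c)) h
  rwa [← mul_assoc, ← upper_add, neg_add_cancel, upper_zero, one_mul] at this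

lemma mem_of_lower_mul_mem (c : ι → R) {A : Matrix (Unit ⊕ ι) (Unit ⊕ ι) R}
    (h : lower c * A ∈ elem (Unit ⊕ ι) R) : A ∈ elem (Unit ⊕ ι) R := by
  have := mul_mem (lower_mem (-c)) h
  rwa [← mul_assoc, ← lower_add, neg_add_cancel, lower_zero, one_mul] at this

lemma det_upper (c : ι → R) : (upper c).det = 1 := by simp [upper]

lemma det_lower (c : ι → R) : (lower c).det = 1 := by simp [lower]

lemma upper_mul_corner (c : ι → R) (A : Matrix (Unit ⊕ ι) (Unit ⊕ ι) R) :
    (upper c * A) (Sum.inl ()) (Sum.inl ()) =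
      A (Sum.inl ()) (Sum.inl ()) + ∑ i, c i * A (Sum.inr i) (Sum.inl ()) := by
  simp [upper, Matrix.mul_apply]

lemma lower_mul_corner (c : ι → R) (A : Matrix (Unit ⊕ ι) (Unit ⊕ ι) R) :
    (lower c * A) (Sum.inl ()) (Sum.inl ()) = A (Sum.inl ()) (Sum.inl ()) := by
  simp [lower, Matrix.mul_apply]

lemma lower_mul_inr (c : ι → R) (A : Matrix (Unit ⊕ ι) (Unit ⊕ ι) R) (i : ι) :
    (lower c * A) (Sum.inr i) (Sum.inl ()) =
      c i * A (Sum.inl ()) (Sum.inl ()) + A (Sum.inr i) (Sum.inl ()) := by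
  simp [lower, Matrix.mul_apply, Matrix.one_apply]

lemma mem_elem_of_corner_one (ih : ∀ B : Matrix ι ι R, B.det = 1 → B ∈ elem ι R)
    {A : Matrix (Unit ⊕ ι) (Unit ⊕ ι) R} (hA : A.det = 1)
    (h : A (Sum.inl ()) (Sum.inl ()) = 1) : A ∈ elem (Unit ⊕ ι) R := by
  have h11 : A.toBlocks₁₁ = 1 := by
    ext ⟨⟩ ⟨⟩
    simpa [toBlocks₁₁] using h
  have hb := fromBlocks_toBlocks A
  rw [h11] at hb
  have hdet : (A.toBlocks₂₂ - A.toBlocks₂₁ * A.toBlocks₁₂).det = 1 := by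
    rw [← det_fromBlocks_one₁₁, hb, hA]
  have key : A = lower (fun i => A (Sum.inr i) (Sum.inl ())) *
      fromBlocks 1 0 0 (A.toBlocks₂₂ - A.toBlocks₂₁ * A.toBlocks₁₂) *
      upper (fun j => A (Sum.inl ()) (Sum.inr j)) := by
    have h21 : replicateCol Unit (fun i => A (Sum.inr i) (Sum.inl ())) = A.toBlocks₂₁ := rfl
    have h12 : replicateRow Unit (fun j => A (Sum.inl ()) (Sum.inr j)) = A.toBlocks₁₂ := rfl
    rw [lower, upper, h21, h12]
    simp [fromBlocks_multiply, hb]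
  rw [key]
  exact mul_mem (mul_mem (lower_mem _) (fromBlocks_one_mem (ih _ hdet))) (upper_mem _)

lemma mem_elem_of_isUnit [Nonempty ι] (ih : ∀ B : Matrix ι ι R, B.det = 1 → B ∈ elem ι R)
    {A : Matrix (Unit ⊕ ι) (Unit ⊕ ι) R} (hA : A.det = 1)
    (h : IsUnit (A (Sum.inl ()) (Sum.inl ()))) : A ∈ elem (Unit ⊕ ι) R := by
  obtain ⟨v, hv⟩ := h.exists_left_inv
  obtain ⟨k⟩ := ‹Nonempty ι›
  set u := A (Sum.inl ()) (Sum.inl ()) with hu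
  -- The first operation puts `1` in row `k` of the first column, the second adds `1 - u` times
  -- that row to the first one.
  apply mem_of_lower_mul_mem (Pi.single k ((1 - A (Sum.inr k) (Sum.inl ())) * v))
  apply mem_of_upper_mul_mem (Pi.single k (1 - u))
  apply mem_elem_of_corner_one ih
  · rw [det_mul, det_mul, det_upper, det_lower, hA, one_mul, one_mul]
  · rw [upper_mul_corner, lower_mul_corner, Finset.sum_eq_single k]
    · rw [lower_mul_inr, Pi.single_eq_same, Pi.single_eq_same, ← hu]
      linear_combination (1 - u) * (1 - A (Sum.inr k) (Sum.inl ())) * hv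
    · intro i _ hi
      simp [hi]
    · simp

lemma mem_elem_of_det [IsArtinianRing R] [Nonempty ι]
    (ih : ∀ B : Matrix ι ι R, B.det = 1 → B ∈ elem ι R)
    {A : Matrix (Unit ⊕ ι) (Unit ⊕ ι) R} (hA : A.det = 1) : A ∈ elem (Unit ⊕ ι) R := by
  -- The first row of the adjugate witnesses unimodularity of the first column.
  have hadj := congrFun (congrFun (adjugate_mul A) (Sum.inl ())) (Sum.inl ())
  rw [hA, one_smul, one_apply_eq, Matrix.mul_apply, Fintype.sum_sum_type] at hadj
  simp only [Finset.univ_unique, Finset.sum_singleton] at hadj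
  obtain ⟨t, ht⟩ := exists_isUnit_add_mul _ _ _ hadj
  apply mem_of_upper_mul_mem (fun i => t * A.adjugate (Sum.inl ()) (Sum.inr i))
  apply mem_elem_of_isUnit ih
  · rw [det_mul, det_upper, hA, one_mul]
  · rw [upper_mul_corner]
    simpa only [Finset.mul_sum, mul_assoc] using ht

lemma mem_elem_fin [IsArtinianRing R] (n : ℕ) :
    ∀ A : Matrix (Fin (n + 1)) (Fin (n + 1)) R, A.det = 1 → A ∈ elem (Fin (n + 1)) R := by
  induction n with
  | zero =>
    intro A hA
    have : A = 1 := by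
      ext i j
      fin_cases i
      fin_cases j
      simpa using hA
    rw [this]
    exact one_mem _
  | succ n ih =>
    intro A hA
    let e : Fin (n + 1 + 1) ≃ Unit ⊕ Fin (n + 1) :=
      Fintype.equivOfCardEq (by simp [add_comm])
    rw [← reindex_mem_iff e]
    apply mem_elem_of_det ih
    rw [det_reindexAlgEquiv, hA]

end ArtinianGE

/-- Every commutative Artinian ring is a generalized Euclidean ring. -/
theorem stmt_15 (R : Type*) [CommRing R] [IsArtinianRing R] : IsGERing R := by
  intro n hn A hA
  obtain ⟨m, rfl⟩ : ∃ m, n = m + 1 := ⟨n - 1, by omega⟩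
  exact ArtinianGE.mem_elem_fin m A hA
end
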